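/- arXiv:math/0703900 — 4 statements merged into one kernel-verified Lean document; each statement's English description precedes it below -/
import Mathlib

section
/- The number of permutations of a 4n-card deck (n ranks, 4 suits) in which no card is replaced by a card of the same rank equals ∑_{m0+m1+m2+m3+m4=n} (-1)^{m1+m3} * multinomial(n; m0,m1,m2,m3,m4) * 16^{m1} * 72^{m2} * 96^{m3} * 24^{m4} * (4n - (m1 + 2m2 + 3m3 + 4m4))!. -/
/-- The number of rank-derangements of a deck with `n` ranks and 4 suits:
permutations of `Fin n × Fin 4` (first coordinate = rank) such that every card
is sent to a card of a different rank. -/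
def R (n : ℕ) : ℕ :=
  (Finset.univ.filter fun σ : Equiv.Perm (Fin n × Fin 4) => ∀ c, (σ c).1 ≠ c.1).card

/-!
By inclusion–exclusion over the sets of cards required to keep their rank, the number of
rank-derangements is a signed sum over one set of cards `T i` for each rank `i`. A permutation
keeping the ranks of these cards amounts to an injection of each `T i` into the cards of rank `i`,
extended arbitrarily to the remaining cards. If there are `N` cards, `s i` of them of rank `i`, this
gives `(∏ i, (s i).descFactorial #(T i)) * (N - ∑ i, #(T i))!` permutations. The factorial depends
on the total size only, so the sum is the image of `∏ i, ∑ k, (-1)^k r(s i, k) X^k` under the linear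
map `X^k ↦ (N - k)!`, where `r(s, k)` is the rook number of the `s × s` board. When all ranks have
equally many cards the product is a power, which the multinomial theorem expands.
-/

open Finset Polynomial Equiv
open scoped Nat

theorem card_perm_extending {α β : Type*} [Fintype α] [DecidableEq α] [Fintype β] (u v : β ↪ α) :
    #{σ : Perm α | ∀ b, σ (u b) = v b} = (Fintype.card α - Fintype.card β)! := by
  classical
  let e : Set.range u ≃ Set.range v :=
    (ofInjective u u.injective).symm.trans (ofInjective v v.injective)
  have extends_iff (σ : Perm α) :
      (∀ b, σ (u b) = v b) ↔ ∀ x : Set.range u, σ x = e x := by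
    rw [← (ofInjective u u.injective).forall_congr_right]
    simp [e]
  have card_compl (w : β ↪ α) :
      Fintype.card ↑(Set.range w)ᶜ = Fintype.card α - Fintype.card β := by
    rw [Fintype.card_compl_set, Set.card_range_of_injective w.injective]
  let compl_equiv : ↑(Set.range u)ᶜ ≃ ↑(Set.range v)ᶜ :=
    Fintype.equivOfCardEq ((card_compl u).trans (card_compl v).symm)
  rw [← Fintype.card_subtype, Fintype.card_congr (subtypeEquivRight extends_iff),
    Fintype.card_congr (Equiv.Set.compl e), Fintype.card_equiv compl_equiv, card_compl]

section Sigma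

variable {ι : Type*} {κ : ι → Type*}

theorem fst_preserved_iff_exists_embedding (T : ∀ i, Finset (κ i))
    {f : (Σ i, κ i) → Σ i, κ i} (hf : Function.Injective f) :
    (∀ i, ∀ a ∈ T i, (f ⟨i, a⟩).1 = i) ↔
      ∃ g : ∀ i, T i ↪ κ i, ∀ i (a : T i), f ⟨i, a⟩ = ⟨i, g i a⟩ := by
  constructor
  · intro hfst
    have image_exists (i) (a : T i) : ∃ b : κ i, f ⟨i, a⟩ = ⟨i, b⟩ :=
      ⟨cast (congrArg κ (hfst i a a.2)) (f ⟨i, a⟩).2, Sigma.ext (hfst i a a.2) (cast_heq _ _).symm⟩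
    choose g hg using image_exists
    have g_injective (i) : Function.Injective (g i) := fun a b hab => by
      have : f ⟨i, a⟩ = f ⟨i, b⟩ := by rw [hg, hg, hab]
      exact Subtype.ext (sigma_mk_injective (hf this))
    exact ⟨fun i => ⟨g i, g_injective i⟩, hg⟩
  · rintro ⟨g, hg⟩ i a ha
    rw [hg i ⟨a, ha⟩]

variable [Fintype ι] [DecidableEq ι] [∀ i, Fintype (κ i)] [∀ i, DecidableEq (κ i)]

theorem card_perm_extending_sigma (T : ∀ i, Finset (κ i)) (g : ∀ i, T i ↪ κ i) :
    #{σ : Perm (Σ i, κ i) | ∀ i (a : T i), σ ⟨i, a⟩ = ⟨i, g i a⟩} =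
      ((∑ i, Fintype.card (κ i)) - ∑ i, #(T i))! := by
  simpa [Sigma.forall] using! card_perm_extending
    ((Function.Embedding.refl ι).sigmaMap fun i => Function.Embedding.subtype (· ∈ T i))
    ((Function.Embedding.refl ι).sigmaMap g)

theorem card_perm_fst_preserved (T : ∀ i, Finset (κ i)) :
    #{σ : Perm (Σ i, κ i) | ∀ i, ∀ a ∈ T i, (σ ⟨i, a⟩).1 = i} =
      (∏ i, (Fintype.card (κ i)).descFactorial #(T i)) *
        ((∑ i, Fintype.card (κ i)) - ∑ i, #(T i))! := by
  have disjoint_extensions : Set.PairwiseDisjoint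
      ((univ : Finset (∀ i, T i ↪ κ i)) : Set (∀ i, T i ↪ κ i))
      fun g => ({σ | ∀ i (a : T i), σ ⟨i, a⟩ = ⟨i, g i a⟩} : Finset (Perm (Σ i, κ i))) := by
    intro g _ h _ hgh
    refine disjoint_left.2 fun σ hσg hσh => hgh ?_
    simp only [mem_filter_univ] at hσg hσh
    ext i a
    exact sigma_mk_injective ((hσg i a).symm.trans (hσh i a))
  calc
    _ = #(univ.biUnion fun g : ∀ i, T i ↪ κ i =>
          {σ : Perm (Σ i, κ i) | ∀ i (a : T i), σ ⟨i, a⟩ = ⟨i, g i a⟩}) := by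
      congr 1
      ext σ
      simp [fst_preserved_iff_exists_embedding T σ.injective]
    _ = ∑ _g : ∀ i, T i ↪ κ i, ((∑ i, Fintype.card (κ i)) - ∑ i, #(T i))! := by
      simp only [card_biUnion disjoint_extensions, card_perm_extending_sigma]
    _ = _ := by
      simp [Fintype.card_embedding_eq]

theorem indicator_forall_not_eq_sum {A : Type*} [CommRing A] (p : (Σ i, κ i) → Prop)
    [DecidablePred p] :
    (if ∀ c, ¬ p c then (1 : A) else 0) =
      ∑ T : ∀ i, Finset (κ i), (∏ i, (-1) ^ #(T i)) *
        if ∀ i, ∀ a ∈ T i, p ⟨i, a⟩ then 1 else 0 := by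
  have one_sub_indicator (c) : (1 + -(if p c then (1 : A) else 0)) = if ¬ p c then 1 else 0 := by
    by_cases hc : p c <;> simp [hc]
  calc
    _ = ∏ i, ∏ a : κ i, (1 + -(if p ⟨i, a⟩ then (1 : A) else 0)) := by
      simp only [one_sub_indicator, prod_boole, mem_univ, true_implies, Sigma.forall]
    _ = ∏ i, ∑ T : Finset (κ i), (-1) ^ #T * if ∀ a ∈ T, p ⟨i, a⟩ then (1 : A) else 0 := by
      simp only [prod_one_add, powerset_univ, prod_neg, prod_boole]
      congr!
    _ = _ := by
      simp only [prod_univ_sum, Fintype.piFinset_univ, prod_mul_distrib, prod_boole, mem_univ,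
        true_implies]

theorem card_perm_fst_ne_eq_sum :
    (#{σ : Perm (Σ i, κ i) | ∀ c, (σ c).1 ≠ c.1} : ℤ) =
      ∑ T : ∀ i, Finset (κ i),
        (∏ i, (-1) ^ #(T i) * ((Fintype.card (κ i)).descFactorial #(T i) : ℤ)) *
          ((∑ i, Fintype.card (κ i)) - ∑ i, #(T i))! := by
  rw [natCast_card_filter,
    sum_congr rfl fun σ _ => indicator_forall_not_eq_sum fun c => (σ c).1 = c.1, sum_comm]
  refine sum_congr rfl fun T _ => ?_
  rw [← mul_sum, ← natCast_card_filter, card_perm_fst_preserved, prod_mul_distrib, mul_assoc]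
  push_cast
  rfl

end Sigma

/-- The number of ways to place `k` non-attacking rooks on the `s × s` board: choose the `k`
occupied rows and assign distinct columns to them. -/
def squareRookNumber (s k : ℕ) : ℕ :=
  s.choose k * s.descFactorial k

/-- The rook polynomial of the `s × s` board, evaluated at `-X` so that its coefficients carry the
signs of inclusion–exclusion. -/
noncomputable def signedSquareRookPolynomial (s : ℕ) : ℤ[X] :=
  ∑ k : Fin (s + 1), monomial (k : ℕ) ((-1) ^ (k : ℕ) * (squareRookNumber s k : ℤ))

/-- The linear functional `X ^ k ↦ (N - k)!`, which counts the ways to complete a placement of `k`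
non-attacking rooks to a permutation of `N` points. The subtraction is truncated, so the value is
only meaningful on polynomials of degree at most `N`. -/
noncomputable def completionFunctional (N : ℕ) : ℤ[X] →ₗ[ℤ] ℤ :=
  Polynomial.lsum fun k => LinearMap.mulRight ℤ ((N - k)! : ℤ)

theorem completionFunctional_monomial (N k : ℕ) (c : ℤ) :
    completionFunctional N (monomial k c) = c * (N - k)! := by
  simp [completionFunctional, Polynomial.lsum_apply, sum_monomial_index]

theorem prod_monomial_eq_monomial_sum {S ι : Type*} [CommSemiring S] (s : Finset ι)
    (d : ι → ℕ) (c : ι → S) :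
    ∏ i ∈ s, monomial (d i) (c i) = monomial (∑ i ∈ s, d i) (∏ i ∈ s, c i) := by
  simp only [← C_mul_X_pow_eq_monomial, prod_mul_distrib, prod_pow_eq_pow_sum, map_prod]

theorem sum_finset_monomial_descFactorial (α : Type*) [Fintype α] :
    ∑ T : Finset α,
        monomial #T ((-1 : ℤ) ^ #T * ((Fintype.card α).descFactorial #T : ℤ)) =
      signedSquareRookPolynomial (Fintype.card α) := by
  rw [← powerset_univ, sum_powerset_apply_card fun k =>
      monomial k ((-1 : ℤ) ^ k * ((Fintype.card α).descFactorial k : ℤ)),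
    signedSquareRookPolynomial, card_univ, Fin.sum_univ_eq_sum_range fun k =>
      monomial k ((-1 : ℤ) ^ k * (squareRookNumber (Fintype.card α) k : ℤ))]
  refine sum_congr rfl fun k _ => ?_
  rw [← map_nsmul, squareRookNumber, nsmul_eq_mul]
  push_cast
  ring_nf

theorem card_perm_fst_ne_eq_completionFunctional {ι : Type*} [Fintype ι] [DecidableEq ι]
    {κ : ι → Type*} [∀ i, Fintype (κ i)] [∀ i, DecidableEq (κ i)] :
    (#{σ : Perm (Σ i, κ i) | ∀ c, (σ c).1 ≠ c.1} : ℤ) =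
      completionFunctional (∑ i, Fintype.card (κ i))
        (∏ i, signedSquareRookPolynomial (Fintype.card (κ i))) := by
  simp only [card_perm_fst_ne_eq_sum, ← sum_finset_monomial_descFactorial, prod_univ_sum,
    Fintype.piFinset_univ, prod_monomial_eq_monomial_sum, map_sum, completionFunctional_monomial]

theorem completionFunctional_signedSquareRookPolynomial_pow (N s n : ℕ) :
    completionFunctional N (signedSquareRookPolynomial s ^ n) =
      ∑ m ∈ Finset.Nat.antidiagonalTuple (s + 1) n,
        (-1) ^ (∑ k, k * m k) * (Nat.multinomial univ m : ℤ) *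
          (∏ k : Fin (s + 1), (squareRookNumber s k : ℤ) ^ m k) * (N - ∑ k, k * m k)! := by
  rw [signedSquareRookPolynomial, sum_pow_eq_sum_piAntidiag,
    piAntidiag_univ_fin_eq_antidiagonalTuple, map_sum]
  refine sum_congr rfl fun m _ => ?_
  simp only [monomial_pow, prod_monomial_eq_monomial_sum, mul_pow, ← pow_mul, prod_mul_distrib,
    prod_pow_eq_pow_sum]
  rw [← nsmul_eq_mul, map_nsmul, completionFunctional_monomial, nsmul_eq_mul]
  ring

theorem card_perm_prod_fst_ne_eq_card_perm_sigma (ι κ : Type*) [Fintype ι] [DecidableEq ι]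
    [Fintype κ] [DecidableEq κ] :
    #{σ : Perm (ι × κ) | ∀ c, (σ c).1 ≠ c.1} =
      #{σ : Perm (Σ _ : ι, κ) | ∀ c, (σ c).1 ≠ c.1} :=
  card_equiv (sigmaEquivProd ι κ).symm.permCongr fun σ => by simp [Sigma.forall]

theorem rank_derangements_formula_general (ι κ : Type*) [Fintype ι] [DecidableEq ι]
    [Fintype κ] [DecidableEq κ] :
    (#{σ : Perm (ι × κ) | ∀ c, (σ c).1 ≠ c.1} : ℤ) =
      ∑ m ∈ Finset.Nat.antidiagonalTuple (Fintype.card κ + 1) (Fintype.card ι),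
        (-1) ^ (∑ k, k * m k) * (Nat.multinomial univ m : ℤ) *
          (∏ k : Fin (Fintype.card κ + 1), (squareRookNumber (Fintype.card κ) k : ℤ) ^ m k) *
          (Fintype.card κ * Fintype.card ι - ∑ k, k * m k)! := by
  rw [card_perm_prod_fst_ne_eq_card_perm_sigma, card_perm_fst_ne_eq_completionFunctional,
    prod_const, card_univ, completionFunctional_signedSquareRookPolynomial_pow, sum_const,
    card_univ, smul_eq_mul, mul_comm (Fintype.card ι)]

theorem rank_derangements_formula (n : ℕ) :
    (R n : ℤ) = ∑ m ∈ Finset.Nat.antidiagonalTuple 5 n,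
      (-1) ^ (m 1 + m 3) * (Nat.multinomial Finset.univ m : ℤ) *
        16 ^ m 1 * 72 ^ m 2 * 96 ^ m 3 * 24 ^ m 4 *
        (Nat.factorial (4 * n - (m 1 + 2 * m 2 + 3 * m 3 + 4 * m 4)) : ℤ) := by
  have formula := rank_derangements_formula_general (Fin n) (Fin 4)
  rw [Fintype.card_fin, Fintype.card_fin] at formula
  rw [R, formula]
  refine sum_congr rfl fun m _ => ?_
  have weight : ∑ k : Fin 5, (k : ℕ) * m k = m 1 + 2 * m 2 + 3 * m 3 + 4 * m 4 := by
    simp [Fin.sum_univ_five]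
  have rook_product : ∏ k : Fin 5, (squareRookNumber 4 k : ℤ) ^ m k =
      16 ^ m 1 * 72 ^ m 2 * 96 ^ m 3 * 24 ^ m 4 := by
    simp [Fin.prod_univ_five, squareRookNumber, Nat.choose, Nat.descFactorial]
  have sign : (-1 : ℤ) ^ (m 1 + 2 * m 2 + 3 * m 3 + 4 * m 4) = (-1) ^ (m 1 + m 3) :=
    neg_one_pow_congr (by grind)
  rw [weight, rook_product, sign]
  ring
end

section
/- R_13/52! < 1/e^4, i.e., the probability of winning frustration solitaire with 13 ranks (a uniformly random permutation of the 52 cards of Fin 13 × Fin 4 having no rank-fixed point) is strictly less than e^{-4}. -/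
/-!
By inclusion–exclusion over the set `S` of cards sent to a card of their own rank, the number of
rank-derangements is an alternating sum of products, over the ranks, of falling factorials, times
`(N - |S|)!`. Under the linear functional `Xᵐ ↦ m!` this sum is the image of a product of
polynomials, one for each rank, and the polynomial of a rank with `q` cards is the monic Laguerre
polynomial of degree `q` (the Even–Gillis formula). For thirteen ranks of four cards the value is
computed by applying the polynomial of degree four, as an operator on sequences, thirteen times to
the sequence of factorials; it is about `0.01623 * 52!`, whereas `e⁻⁴` is about `0.01832`.
-/

open Finset Polynomial
open scoped Nat

section Extension

variable {α β : Type*} [Fintype α] [Fintype β] [DecidableEq α] [DecidableEq β]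

theorem card_equiv_extending_embedding (hcard : Fintype.card α = Fintype.card β) (S : Finset α)
    (e : S ↪ β) :
    #{σ : α ≃ β | ∀ x : S, σ x = e x} = (Fintype.card α - #S)! := by
  let range_equiv : (S : Set α) ≃ Set.range e := Equiv.ofInjective e e.injective
  have card_compl_source : Fintype.card ((S : Set α)ᶜ : Set α) = Fintype.card α - #S := by
    rw [Fintype.card_compl_set]
    simp
  have card_compl_range : Fintype.card ((Set.range e)ᶜ : Set β) = Fintype.card α - #S := by
    rw [Fintype.card_compl_set, Set.card_range_of_injective e.injective, hcard, Fintype.card_coe]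
  have compl_equiv : ((S : Set α)ᶜ : Set α) ≃ ((Set.range e)ᶜ : Set β) :=
    Fintype.equivOfCardEq (card_compl_source.trans card_compl_range.symm)
  rw [← Fintype.card_subtype, ← card_compl_source, ← Fintype.card_equiv compl_equiv]
  exact Fintype.card_congr (Equiv.Set.compl range_equiv)

end Extension

section Fibers

variable {α β ι : Type*}

/-- An embedding over `ι` is a family of embeddings between the corresponding fibers. -/
def embeddingOverEquivPiFiber (p : β → ι) (r : α → ι) :
    {e : β ↪ α // ∀ b, r (e b) = p b} ≃ ∀ i, {b // p b = i} ↪ {a // r a = i} where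
  toFun e i :=
    ⟨fun b => ⟨e.1 b, (e.2 b).trans b.2⟩, fun b c h =>
      Subtype.ext (e.1.injective (congrArg Subtype.val h))⟩
  invFun g :=
    ⟨⟨fun b => (g (p b) ⟨b, rfl⟩).1, fun b c h => by
      have same_fiber : p c = p b :=
        (g (p c) ⟨c, rfl⟩).2.symm.trans ((congrArg r h).symm.trans (g (p b) ⟨b, rfl⟩).2)
      have transport : ∀ i (hi : p c = i), (g (p c) ⟨c, rfl⟩).1 = (g i ⟨c, hi⟩).1 := by
        rintro _ rfl
        rfl
      exact congrArg Subtype.val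
        ((g (p b)).injective (Subtype.ext (h.trans (transport _ same_fiber))))⟩,
      fun b => (g (p b) ⟨b, rfl⟩).2⟩
  left_inv _ := rfl
  right_inv g := by
    funext i
    ext ⟨b, rfl⟩
    rfl

variable [Fintype α] [Fintype β] [Fintype ι] [DecidableEq ι]

theorem card_embedding_over (p : β → ι) (r : α → ι) :
    #{e : β ↪ α | ∀ b, r (e b) = p b} = ∏ i, (#{a | r a = i}).descFactorial #{b | p b = i} := by
  rw [← Fintype.card_subtype, Fintype.card_congr (embeddingOverEquivPiFiber p r), Fintype.card_pi]
  simp only [Fintype.card_embedding_eq, Fintype.card_subtype]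

theorem card_perm_preserving_on [DecidableEq α] (r : α → ι) (S : Finset α) :
    #{σ : Equiv.Perm α | ∀ a ∈ S, r (σ a) = r a} =
      (∏ i, (#{a | r a = i}).descFactorial #{a ∈ S | r a = i}) * (Fintype.card α - #S)! := by
  let restrict (σ : Equiv.Perm α) : S ↪ α := (Function.Embedding.subtype _).trans σ.toEmbedding
  have restrict_eq_iff (σ : Equiv.Perm α) (e : S ↪ α) :
      restrict σ = e ↔ ∀ x : S, σ x = e x := DFunLike.ext_iff
  have maps_to : Set.MapsTo restrict
      ({σ : Equiv.Perm α | ∀ a ∈ S, r (σ a) = r a} : Finset _)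
      ({e : S ↪ α | ∀ x, r (e x) = r x} : Finset _) := by
    intro σ hσ
    simp only [coe_filter, mem_univ, true_and, Set.mem_ofPred_eq] at hσ ⊢
    exact fun x => hσ x x.2
  have card_fiber : ∀ e ∈ ({e : S ↪ α | ∀ x, r (e x) = r x} : Finset _),
      #{σ ∈ {σ : Equiv.Perm α | ∀ a ∈ S, r (σ a) = r a} | restrict σ = e} =
        (Fintype.card α - #S)! := by
    intro e he
    rw [← card_equiv_extending_embedding rfl S e, filter_filter]
    congr 1
    ext σ
    simp only [mem_filter, mem_univ, true_and, restrict_eq_iff] at he ⊢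
    exact and_iff_right_of_imp fun hσ a ha => hσ ⟨a, ha⟩ ▸ he ⟨a, ha⟩
  have card_fiber_inter (i : ι) : #{x : S | r x = i} = #{a ∈ S | r a = i} := by
    rw [← card_map (Function.Embedding.subtype _)]
    congr 1
    ext a
    simp [and_comm]
  rw [card_eq_sum_card_fiberwise maps_to, sum_congr rfl card_fiber, sum_const, smul_eq_mul,
    card_embedding_over]
  simp only [card_fiber_inter]

theorem sum_prod_filter_fiber {A : Type*} [CommSemiring A] (r : α → ι) (g : ι → Finset α → A) :
    ∑ S : Finset α, ∏ i, g i {a ∈ S | r a = i} = ∏ i, ∑ T ∈ powerset {a | r a = i}, g i T := by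
  classical
  rw [prod_univ_sum]
  refine sum_bij' (fun S _ i => {a ∈ S | r a = i}) (fun T _ => univ.biUnion T) ?_ ?_ ?_ ?_ ?_
  · intro S _
    simp only [Fintype.mem_piFinset, mem_powerset]
    exact fun i => filter_subset_filter _ (subset_univ S)
  · exact fun T _ => mem_univ _
  · intro S _
    ext a
    simp
  · intro T hT
    have mem_fiber {i a} (ha : a ∈ T i) : r a = i := by
      simpa using mem_powerset.1 (Fintype.mem_piFinset.1 hT i) ha
    funext i
    ext a
    simp only [mem_filter, mem_biUnion, mem_univ, true_and]
    constructor
    · rintro ⟨⟨j, hj⟩, rfl⟩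
      exact mem_fiber hj ▸ hj
    · exact fun ha => ⟨⟨i, ha⟩, mem_fiber ha⟩
  · exact fun S _ => rfl

end Fibers

section EvenGillis

/-- The linear functional `Xᵐ ↦ m!`, that is, `p ↦ ∫₀^∞ p(x) e⁻ˣ dx`. -/
noncomputable def factorialFunctional : ℤ[X] →ₗ[ℤ] ℤ :=
  lsum fun m => (m ! : ℤ) • LinearMap.id

theorem factorialFunctional_C_mul_X_pow (c : ℤ) (m : ℕ) :
    factorialFunctional (C c * X ^ m) = c * m ! := by
  rw [C_mul_X_pow_eq_monomial, factorialFunctional, lsum_apply, sum_monomial_index]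
  · simp [mul_comm]
  · simp

/-- The contribution to inclusion–exclusion of a rank with `q` cards, `k` of which are required to
go to cards of that rank: a sign, the number of ways to place them, and the number of cards left
over as the exponent. -/
noncomputable def signedHitTerm (q k : ℕ) : ℤ[X] :=
  C ((-1 : ℤ) ^ k * (q.descFactorial k : ℤ)) * X ^ (q - k)

/-- The Laguerre polynomial normalized to be monic, `(-1)^q q! L_q`, as the sum of the
contributions of all subsets of a `q`-element rank. -/
noncomputable def monicLaguerre (q : ℕ) : ℤ[X] :=
  ∑ k ∈ range (q + 1), q.choose k • signedHitTerm q k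

variable {α ι : Type*} [Fintype α] [DecidableEq α] [DecidableEq ι]

theorem card_perm_forall_ne_eq_sum (r : α → ι) :
    (#{σ : Equiv.Perm α | ∀ a, r (σ a) ≠ r a} : ℤ) =
      ∑ S : Finset α, (-1 : ℤ) ^ #S * #{σ : Equiv.Perm α | ∀ a ∈ S, r (σ a) = r a} := by
  let hits (a : α) : Finset (Equiv.Perm α) := {σ | r (σ a) = r a}
  have inf_compl_hits : ({σ | ∀ a, r (σ a) ≠ r a} : Finset (Equiv.Perm α)) =
      univ.inf fun a => (hits a)ᶜ := by
    ext σ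
    simp [hits, mem_inf]
  have inf_hits (S : Finset α) :
      ({σ | ∀ a ∈ S, r (σ a) = r a} : Finset (Equiv.Perm α)) = S.inf hits := by
    ext σ
    simp [hits, mem_inf]
  simp only [inf_hits]
  rw [inf_compl_hits, inclusion_exclusion_card_inf_compl, powerset_univ]

variable [Fintype ι]

theorem factorialFunctional_prod_signedHitTerm (r : α → ι) (S : Finset α) :
    factorialFunctional (∏ i, signedHitTerm #{a | r a = i} #{a ∈ S | r a = i}) =
      (-1) ^ #S * #{σ : Equiv.Perm α | ∀ a ∈ S, r (σ a) = r a} := by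
  have sum_card_fiber (T : Finset α) : ∑ i, #{a ∈ T | r a = i} = #T :=
    (card_eq_sum_card_fiberwise fun _ _ => mem_univ _).symm
  have sum_card_sub : ∑ i, (#{a | r a = i} - #{a ∈ S | r a = i}) = Fintype.card α - #S := by
    rw [sum_tsub_distrib _ fun i _ => card_le_card (filter_subset_filter _ (subset_univ S)),
      sum_card_fiber, sum_card_fiber, card_univ]
  simp only [signedHitTerm]
  rw [prod_mul_distrib, prod_pow_eq_pow_sum, sum_card_sub, ← map_prod,
    factorialFunctional_C_mul_X_pow, prod_mul_distrib, prod_pow_eq_pow_sum, sum_card_fiber,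
    card_perm_preserving_on]
  push_cast
  ring

theorem card_perm_forall_ne_eq_factorialFunctional (r : α → ι) :
    (#{σ : Equiv.Perm α | ∀ a, r (σ a) ≠ r a} : ℤ) =
      factorialFunctional (∏ i, monicLaguerre #{a | r a = i}) := by
  have sum_powerset_fiber (i : ι) :
      ∑ T ∈ powerset {a | r a = i}, signedHitTerm #{a | r a = i} #T =
        monicLaguerre #{a | r a = i} := sum_powerset_apply_card _
  simp only [card_perm_forall_ne_eq_sum, ← factorialFunctional_prod_signedHitTerm, ← map_sum,
    ← sum_powerset_fiber]
  rw [sum_prod_filter_fiber r fun i T => signedHitTerm #{a | r a = i} #T]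

theorem R_eq_factorialFunctional (n : ℕ) :
    (R n : ℤ) = factorialFunctional (monicLaguerre 4 ^ n) := by
  have card_rank (i : Fin n) : #{c : Fin n × Fin 4 | c.1 = i} = 4 := by
    have rank_eq_product : ({c | c.1 = i} : Finset (Fin n × Fin 4)) = {i} ×ˢ univ := by
      ext ⟨j, k⟩
      simp [eq_comm]
    simp [rank_eq_product]
  rw [R, card_perm_forall_ne_eq_factorialFunctional Prod.fst]
  simp only [card_rank, prod_const, card_univ, Fintype.card_fin]

end EvenGillis

section Evaluation

theorem monicLaguerre_four :
    monicLaguerre 4 = X ^ 4 - 16 * X ^ 3 + 72 * X ^ 2 - 96 * X + 24 := by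
  simp only [monicLaguerre, signedHitTerm, sum_range_succ, sum_range_zero, Nat.choose,
    Nat.descFactorial, nsmul_eq_mul, eq_intCast]
  push_cast
  ring

theorem factorialFunctional_X_pow (m : ℕ) : factorialFunctional (X ^ m) = m ! := by
  simpa using factorialFunctional_C_mul_X_pow 1 m

theorem factorialFunctional_X_pow_mul_monicLaguerre_four_mul (m : ℕ) (p : ℤ[X]) :
    factorialFunctional (X ^ m * (monicLaguerre 4 * p)) =
      24 * factorialFunctional (X ^ m * p) - 96 * factorialFunctional (X ^ (m + 1) * p) +
        72 * factorialFunctional (X ^ (m + 2) * p) - 16 * factorialFunctional (X ^ (m + 3) * p) +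
          factorialFunctional (X ^ (m + 4) * p) := by
  have expand : X ^ m * (monicLaguerre 4 * p) =
      (24 : ℤ) • (X ^ m * p) - (96 : ℤ) • (X ^ (m + 1) * p) + (72 : ℤ) • (X ^ (m + 2) * p) -
        (16 : ℤ) • (X ^ (m + 3) * p) + X ^ (m + 4) * p := by
    rw [monicLaguerre_four]
    simp only [zsmul_eq_mul]
    push_cast
    ring
  rw [expand]
  simp only [map_add, map_sub, map_smul, smul_eq_mul]

/-- `monicLaguerre 4` with `X` acting as the shift, applied to a finite segment of a sequence; the
last four entries are lost. This form can be evaluated by the kernel. -/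
def applyMonicLaguerreFour : List ℤ → List ℤ
  | a :: b :: c :: d :: e :: l =>
    (24 * a - 96 * b + 72 * c - 16 * d + e) :: applyMonicLaguerreFour (b :: c :: d :: e :: l)
  | _ => []

theorem applyMonicLaguerreFour_map_range' (p : ℤ[X]) (m k : ℕ) :
    applyMonicLaguerreFour
        ((List.range' m (k + 4)).map fun j => factorialFunctional (X ^ j * p)) =
      (List.range' m k).map fun j => factorialFunctional (X ^ j * (monicLaguerre 4 * p)) := by
  induction k generalizing m with
  | zero => rfl
  | succ k ih =>
    have tail_eq := ih (m + 1)
    simp only [List.range'_succ, List.map_cons, applyMonicLaguerreFour, add_assoc,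
      Nat.reduceAdd, List.cons.injEq] at tail_eq ⊢
    exact ⟨(factorialFunctional_X_pow_mul_monicLaguerre_four_mul m p).symm, tail_eq⟩

theorem iterate_applyMonicLaguerreFour_map_range' (n : ℕ) (p : ℤ[X]) (m k : ℕ) :
    applyMonicLaguerreFour^[n]
        ((List.range' m (k + 4 * n)).map fun j => factorialFunctional (X ^ j * p)) =
      (List.range' m k).map fun j => factorialFunctional (X ^ j * (monicLaguerre 4 ^ n * p)) := by
  induction n generalizing p with
  | zero => simp
  | succ n ih =>
    rw [Function.iterate_succ_apply, mul_add_one, ← add_assoc, applyMonicLaguerreFour_map_range',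
      ih, pow_succ]
    simp only [mul_assoc]

theorem iterate_applyMonicLaguerreFour_factorial (n : ℕ) :
    applyMonicLaguerreFour^[n] ((List.range' 0 (1 + 4 * n)).map fun j => (j ! : ℤ)) =
      [(R n : ℤ)] := by
  simpa [factorialFunctional_X_pow, R_eq_factorialFunctional] using
    iterate_applyMonicLaguerreFour_map_range' n 1 0 1

theorem R_thirteen :
    R 13 = 1309302175551177162931045000259922525308763433362019257020678406144 := by
  have iterate_thirteen :
      applyMonicLaguerreFour^[13] ((List.range' 0 (1 + 4 * 13)).map fun j => (j ! : ℤ)) =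
        [1309302175551177162931045000259922525308763433362019257020678406144] := by
    decide +kernel
  rw [iterate_applyMonicLaguerreFour_factorial, List.singleton_inj] at iterate_thirteen
  exact_mod_cast iterate_thirteen

end Evaluation

theorem seventeen_div_thousand_lt_exp_neg_four : (17 / 1000 : ℝ) < Real.exp (-4) := by
  have exp_four_lt : Real.exp 4 < 2.7182818286 ^ 4 := by
    rw [← Nat.cast_ofNat, ← Real.exp_one_pow]
    exact pow_lt_pow_left₀ Real.exp_one_lt_d9 (Real.exp_pos 1).le four_ne_zero
  rw [Real.exp_neg, lt_inv_comm₀ (by norm_num) (Real.exp_pos 4)]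
  exact exp_four_lt.trans (by norm_num)

theorem frustration_solitaire_lt_exp_neg_four :
    (R 13 : ℝ) / (Nat.factorial 52 : ℝ) < Real.exp (-4) := by
  calc (R 13 : ℝ) / (Nat.factorial 52 : ℝ) < 17 / 1000 := by
        rw [R_thirteen, div_lt_div_iff₀ (by positivity) (by norm_num)]
        norm_num [Nat.factorial]
    _ < Real.exp (-4) := seventeen_div_thousand_lt_exp_neg_four
end

section
/- The sequence p_n = R_n/(4n)! is eventually monotone increasing toward e^{-4}; in particular p_13 < p_20 < p_50 < e^{-4}, where p_13 ≈ 0.016233, p_20 ≈ 0.016954, p_50 ≈ 0.017768. -/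
/-- `p n` is the probability that a random permutation of the deck is a rank-derangement. -/
noncomputable def p (n : ℕ) : ℝ := (R n : ℝ) / (Nat.factorial (4 * n) : ℝ)

/-!
By inclusion-exclusion, the number of rank-derangements of a deck with `n` ranks and `m` suits is
`∫₀^∞ Λ(x)ⁿ e^{-x} dx`, where `Λ` is the monic Laguerre polynomial of degree `m`. Let `v j n` be the
moment `∫₀^∞ xʲ Λ(x)ⁿ e^{-x} dx` divided by `(m n + j)!`, so that `p n = v 0 n` for `m = 4`. Every
`v j n` tends to `e^{-m}`, by dominated convergence in the inclusion-exclusion sum.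

Expanding one factor of `Λ` expresses `v j (n + 1)` through the `v i n`, and integration by parts
does the same for `v (j + 1) (n + 1) - v j (n + 1)`. Keeping the terms of the first two orders in
`1 / n` gives `n² (v 0 (n + 1) - v 0 n) → (m - 1) / 2 * e^{-m}`, so `v 0` is eventually increasing
when `m ≥ 2`.
-/

namespace RankDerangement

open Finset Polynomial Filter Topology
open scoped Nat

section FactorialFunctional

/-- The linear functional `f ↦ ∫₀^∞ f(x) e^{-x} dx` on integer polynomials, encoded by its values
`k!` on the monomials `X ^ k`. -/
noncomputable def laplace : ℤ[X] →ₗ[ℤ] ℤ :=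
  Polynomial.lsum fun k => (k ! : ℤ) • LinearMap.id

lemma laplace_C_mul (a : ℤ) (f : ℤ[X]) : laplace (C a * f) = a * laplace f := by
  rw [← smul_eq_C_mul, map_smul, smul_eq_mul]

lemma laplace_C_mul_X_pow (a : ℤ) (k : ℕ) : laplace (C a * X ^ k) = a * k ! := by
  rw [C_mul_X_pow_eq_monomial]
  simp [laplace, lsum_apply, mul_comm]

lemma laplace_derivative (f : ℤ[X]) : laplace (derivative f) = laplace f - f.coeff 0 := by
  induction f using Polynomial.induction_on' with
  | add f g hf hg => rw [derivative_add, map_add, map_add, coeff_add, hf, hg]; ring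
  | monomial k a =>
    rw [derivative_monomial, ← C_mul_X_pow_eq_monomial, ← C_mul_X_pow_eq_monomial,
      laplace_C_mul_X_pow, laplace_C_mul_X_pow]
    cases k with
    | zero => simp
    | succ k => simp [Nat.factorial_succ, mul_assoc]

end FactorialFunctional

section Laguerre

/-- The polynomial `xᵈ f(-1/x)`, for `f` of degree at most `d`. It turns a rook polynomial `f` into
the integrand counting the placements that avoid the board. -/
noncomputable def signedReversal (d : ℕ) (f : ℕ[X]) : ℤ[X] :=
  reflect d ((f.map (Nat.castRingHom ℤ)).comp (C (-1) * X))

lemma signedReversal_mul {d d' : ℕ} {f g : ℕ[X]} (hf : f.natDegree ≤ d) (hg : g.natDegree ≤ d') :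
    signedReversal (d + d') (f * g) = signedReversal d f * signedReversal d' g := by
  have hdeg {h : ℕ[X]} {c : ℕ} (hh : h.natDegree ≤ c) :
      ((h.map (Nat.castRingHom ℤ)).comp (C (-1) * X)).natDegree ≤ c := by
    rw [natDegree_comp, natDegree_C_mul_X _ (by norm_num), mul_one]
    exact natDegree_map_le.trans hh
  rw [signedReversal, Polynomial.map_mul, mul_comp, reflect_mul _ _ (hdeg hf) (hdeg hg)]
  rfl

lemma signedReversal_pow {d : ℕ} {f : ℕ[X]} (hf : f.natDegree ≤ d) (n : ℕ) :
    signedReversal (d * n) (f ^ n) = signedReversal d f ^ n := by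
  induction n with
  | zero => simp [signedReversal]
  | succ n ih =>
    rw [mul_add_one, pow_succ, signedReversal_mul (natDegree_pow_le_of_le n hf |>.trans_eq
      (mul_comm _ _)) hf, ih, pow_succ]

lemma signedReversal_eq_sum {d : ℕ} {f : ℕ[X]} (hf : f.natDegree ≤ d) :
    signedReversal d f = ∑ k ∈ range (d + 1), C ((-1) ^ k * (f.coeff k : ℤ)) * X ^ (d - k) := by
  have hdeg : (signedReversal d f).natDegree < d + 1 := by
    refine Nat.lt_succ_of_le (natDegree_reflect_le.trans (max_le le_rfl ?_))
    rw [natDegree_comp, natDegree_C_mul_X _ (by norm_num), mul_one]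
    exact natDegree_map_le.trans hf
  rw [(signedReversal d f).as_sum_range_C_mul_X_pow' hdeg, ← sum_range_reflect]
  refine sum_congr rfl fun k hk => ?_
  have hkd : k ≤ d := mem_range_succ_iff.mp hk
  rw [add_tsub_cancel_right, signedReversal, coeff_reflect, revAt_le (d.sub_le k),
    Nat.sub_sub_self hkd, comp_C_mul_X_coeff, coeff_map, mul_comm (Nat.castRingHom ℤ _),
    Nat.coe_castRingHom]

lemma laplace_X_pow_mul_signedReversal {d : ℕ} {f : ℕ[X]} (hf : f.natDegree ≤ d) (j : ℕ) :
    laplace (X ^ j * signedReversal d f) =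
      ∑ k ∈ range (d + 1), (-1) ^ k * (f.coeff k : ℤ) * (d - k + j)! := by
  rw [signedReversal_eq_sum hf, mul_sum, map_sum]
  refine sum_congr rfl fun k _ => ?_
  rw [mul_left_comm, ← pow_add, add_comm j, laplace_C_mul_X_pow]

/-- The rook polynomial of the `m × m` board. -/
noncomputable def rook (m : ℕ) : ℕ[X] :=
  ∑ k ∈ range (m + 1), C (m.choose k * m.descFactorial k) * X ^ k

/-- The monic Laguerre polynomial `(-1)ᵐ m! Lₘ`. -/
noncomputable def laguerre (m : ℕ) : ℤ[X] := signedReversal m (rook m)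

/-- The coefficient of `X ^ (m - k)` in the monic Laguerre polynomial of degree `m`. -/
def laguerreCoeff (m k : ℕ) : ℤ := (-1) ^ k * (m.choose k * m.descFactorial k : ℕ)

lemma coeff_rook (m k : ℕ) : (rook m).coeff k = m.choose k * m.descFactorial k := by
  simp only [rook, finsetSum_coeff, coeff_C_mul_X_pow]
  rw [Finset.sum_ite_eq]
  grind

lemma natDegree_rook_le (m : ℕ) : (rook m).natDegree ≤ m :=
  natDegree_sum_le_of_forall_le _ _ fun k hk =>
    (natDegree_C_mul_X_pow_le _ k).trans (mem_range_succ_iff.mp hk)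

lemma laguerre_eq_sum (m : ℕ) :
    laguerre m = ∑ k ∈ range (m + 1), C (laguerreCoeff m k) * X ^ (m - k) := by
  simp_rw [laguerre, signedReversal_eq_sum (natDegree_rook_le m), coeff_rook, laguerreCoeff]

lemma laguerre_card_eq_sum_powerset {ι : Type*} (s : Finset ι) :
    laguerre #s =
      ∑ t ∈ s.powerset, C ((-1) ^ #t * ((#s).descFactorial #t : ℤ)) * X ^ (#s - #t) := by
  rw [sum_powerset_apply_card fun k => C ((-1) ^ k * ((#s).descFactorial k : ℤ)) * X ^ (#s - k),
    laguerre_eq_sum]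
  refine sum_congr rfl fun k _ => ?_
  simp only [laguerreCoeff, nsmul_eq_mul, Nat.cast_mul, map_mul, map_natCast]
  ring

lemma X_mul_derivative_C_mul_X_pow (a : ℤ) (d : ℕ) :
    X * derivative (C a * X ^ d) = C (d * a) * X ^ d := by
  rw [derivative_C_mul_X_pow, mul_comm (d : ℤ)]
  cases d with
  | zero => simp
  | succ d => rw [add_tsub_cancel_right, pow_succ]; ring

lemma X_mul_derivative_laguerre (m : ℕ) :
    X * derivative (laguerre m) = C (m : ℤ) * laguerre m -
      ∑ k ∈ range (m + 1), C (k * laguerreCoeff m k) * X ^ (m - k) := by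
  rw [laguerre_eq_sum, derivative_sum, mul_sum, mul_sum, ← sum_sub_distrib]
  refine sum_congr rfl fun k hk => ?_
  rw [X_mul_derivative_C_mul_X_pow, Nat.cast_sub (mem_range_succ_iff.mp hk), sub_mul, map_sub,
    sub_mul, map_mul, mul_assoc]

end Laguerre

section Count

lemma prod_sum_powerset_fiber {D α A : Type*} [Fintype D] [Fintype α] [DecidableEq α]
    [CommSemiring A] (f : D → α) (g : α → Finset D → A) :
    ∏ r, ∑ T ∈ powerset {c | f c = r}, g r T = ∑ S : Finset D, ∏ r, g r {c ∈ S | f c = r} := by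
  classical
  rw [prod_univ_sum]
  refine sum_nbij' (fun T => univ.filter fun c => c ∈ T (f c)) (fun S r => {c ∈ S | f c = r})
    (fun _ _ => mem_univ _) ?_ ?_ ?_ ?_
  · intro S _
    simpa using fun r => filter_subset_filter _ (subset_univ S)
  · intro T hT
    have hT : ∀ r, ∀ c ∈ T r, f c = r := by
      simpa [subset_iff] using hT
    ext r c
    grind
  · intro S _
    ext c
    simp
  · intro T hT
    have hT : ∀ r, ∀ c ∈ T r, f c = r := by
      simpa [subset_iff] using hT
    refine prod_congr rfl fun r _ => congrArg (g r) ?_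
    grind

variable {D α : Type*} [Fintype D] [DecidableEq D] [DecidableEq α] (f : D → α)

/-- The permutations of the deck `D` that preserve the rank `f` of every card in `S`. -/
def rankPreservingOn (S : Finset D) : Finset (Equiv.Perm D) := {σ | ∀ c ∈ S, f (σ c) = f c}

variable {f}

lemma mem_rankPreservingOn {S : Finset D} {σ : Equiv.Perm D} :
    σ ∈ rankPreservingOn f S ↔ ∀ c ∈ S, f (σ c) = f c := by
  simp [rankPreservingOn]

lemma card_filter_compl_of_mem_rankPreservingOn {S : Finset D} {σ : Equiv.Perm D}
    (hσ : σ ∈ rankPreservingOn f S) (r : α) :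
    #{c ∈ Sᶜ | f (σ c) = r} = #{c | f c = r} - #{c ∈ S | f c = r} := by
  have hfiber : #{c | f (σ c) = r} = #{c | f c = r} :=
    card_equiv σ (by simp)
  have hS : #{c ∈ S | f (σ c) = r} = #{c ∈ S | f c = r} :=
    congrArg card (filter_congr fun c hc => by rw [mem_rankPreservingOn.mp hσ c hc])
  rw [← hfiber, ← hS, ← union_compl S, filter_union,
    card_union_of_disjoint (disjoint_filter_filter disjoint_compl_right), Nat.add_sub_cancel_left]

lemma swap_mul_mem_rankPreservingOn {S : Finset D} {c d : D} (hc : c ∉ S) (hd : d ∉ S)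
    {σ : Equiv.Perm D} : σ * Equiv.swap c d ∈ rankPreservingOn f S ↔ σ ∈ rankPreservingOn f S := by
  simp only [mem_rankPreservingOn]
  refine forall₂_congr fun a ha => ?_
  rw [Equiv.Perm.mul_apply, Equiv.swap_apply_of_ne_of_ne (by grind) (by grind)]

lemma card_filter_rankPreservingOn {S : Finset D} {c d : D} (hc : c ∉ S) (hd : d ∉ S) :
    #{σ ∈ rankPreservingOn f S | f (σ d) = f c} = #(rankPreservingOn f (insert c S)) := by
  refine card_equiv (Equiv.mulRight (Equiv.swap c d)) fun σ => ?_
  have hinsert : ∀ τ, τ ∈ rankPreservingOn f (insert c S) ↔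
      τ ∈ rankPreservingOn f S ∧ f (τ c) = f c := by
    simp [mem_rankPreservingOn, and_comm]
  simp [hinsert, swap_mul_mem_rankPreservingOn hc hd]

lemma card_rankPreservingOn_insert_mul {S : Finset D} {c : D} (hc : c ∉ S) :
    #(rankPreservingOn f (insert c S)) * (Fintype.card D - #S) =
      #(rankPreservingOn f S) * (#{d | f d = f c} - #{d ∈ S | f d = f c}) := by
  have hdouble := sum_card_bipartiteAbove_eq_sum_card_bipartiteBelow
    (s := rankPreservingOn f S) (t := Sᶜ) (fun σ d => f (σ d) = f c)
  simp only [bipartiteAbove, bipartiteBelow] at hdouble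
  rw [sum_const_nat fun σ hσ => card_filter_compl_of_mem_rankPreservingOn hσ (f c),
    sum_const_nat fun d hd => card_filter_rankPreservingOn hc (mem_compl.mp hd),
    card_compl] at hdouble
  rw [hdouble, mul_comm]

lemma prod_descFactorial_card_filter_insert [Fintype α] {S : Finset D} {c : D} (hc : c ∉ S) :
    ∏ r, (#{d | f d = r}).descFactorial #{d ∈ insert c S | f d = r} =
      (∏ r, (#{d | f d = r}).descFactorial #{d ∈ S | f d = r}) *
        (#{d | f d = f c} - #{d ∈ S | f d = f c}) := by
  have hself : #{d ∈ insert c S | f d = f c} = #{d ∈ S | f d = f c} + 1 := by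
    rw [filter_insert, if_pos rfl, card_insert_of_notMem (by simp [hc])]
  have hne : ∀ r ∈ univ.erase (f c), #{d ∈ insert c S | f d = r} = #{d ∈ S | f d = r} :=
    fun r hr => by rw [filter_insert, if_neg (ne_of_mem_erase hr).symm]
  rw [← mul_prod_erase univ _ (mem_univ (f c)), hself, Nat.descFactorial_succ,
    prod_congr rfl fun r hr => by rw [hne r hr], ← mul_prod_erase univ _ (mem_univ (f c))]
  ring

lemma card_rankPreservingOn [Fintype α] (S : Finset D) :
    #(rankPreservingOn f S) = (Fintype.card D - #S)! *
      ∏ r, (#{c | f c = r}).descFactorial #{c ∈ S | f c = r} := by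
  induction S using Finset.induction_on with
  | empty => simp [rankPreservingOn, Fintype.card_perm]
  | insert c S hc ih =>
    have hlt : #S < Fintype.card D := card_lt_univ_of_notMem hc
    refine Nat.eq_of_mul_eq_mul_right (Nat.sub_pos_of_lt hlt) ?_
    rw [card_rankPreservingOn_insert_mul hc, ih, prod_descFactorial_card_filter_insert hc,
      card_insert_of_notMem hc, ← Nat.mul_factorial_pred (Nat.sub_ne_zero_of_lt hlt), Nat.sub_sub]
    ring

lemma card_derangements_eq_sum :
    (#{σ : Equiv.Perm D | ∀ c, f (σ c) ≠ f c} : ℤ) =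
      ∑ S : Finset D, (-1) ^ #S * (#(rankPreservingOn f S) : ℤ) := by
  have hie := inclusion_exclusion_card_inf_compl (univ : Finset D)
    fun c => ({σ | f (σ c) = f c} : Finset (Equiv.Perm D))
  have hinf (S : Finset D) : S.inf (fun c => ({σ | f (σ c) = f c} : Finset (Equiv.Perm D))) =
      rankPreservingOn f S := by
    ext σ
    simp [mem_inf, rankPreservingOn]
  simp only [hinf, powerset_univ] at hie
  convert hie using 3
  ext σ
  simp [mem_inf]

theorem card_derangements_eq_laplace [Fintype α] :
    (#{σ : Equiv.Perm D | ∀ c, f (σ c) ≠ f c} : ℤ) =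
      laplace (∏ r, laguerre #{c | f c = r}) := by
  have hcard (S : Finset D) : ∑ r, #{c ∈ S | f c = r} = #S :=
    (card_eq_sum_card_fiberwise fun _ _ => mem_univ _).symm
  have hsub (S : Finset D) : ∑ r, (#{c | f c = r} - #{c ∈ S | f c = r}) = Fintype.card D - #S := by
    rw [sum_tsub_distrib _ fun r _ => card_le_card (filter_subset_filter _ (subset_univ S)),
      hcard, hcard, card_univ]
  simp_rw [laguerre_card_eq_sum_powerset]
  rw [prod_sum_powerset_fiber f, map_sum, card_derangements_eq_sum]
  refine sum_congr rfl fun S _ => ?_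
  rw [prod_mul_distrib, ← map_prod, prod_pow_eq_pow_sum, laplace_C_mul_X_pow, prod_mul_distrib,
    prod_pow_eq_pow_sum, hcard, hsub, card_rankPreservingOn]
  push_cast
  ring

end Count

section Moment

/-- The moment `∫₀^∞ xʲ Λₘ(x)ⁿ e^{-x} dx`, where `Λₘ` is the monic Laguerre polynomial. -/
noncomputable def moment (m j n : ℕ) : ℤ := laplace (X ^ j * laguerre m ^ n)

lemma moment_eq_sum (m j n : ℕ) :
    moment m j n =
      ∑ k ∈ range (m * n + 1), (-1) ^ k * ((rook m ^ n).coeff k : ℤ) * (m * n - k + j)! := by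
  have hdeg : (rook m ^ n).natDegree ≤ m * n :=
    (natDegree_pow_le_of_le n (natDegree_rook_le m)).trans_eq (mul_comm _ _)
  rw [moment, laguerre, ← signedReversal_pow (natDegree_rook_le m),
    laplace_X_pow_mul_signedReversal hdeg]

lemma laplace_X_pow_mul_sum_mul_laguerre_pow (m j n : ℕ) (a : ℕ → ℤ) :
    laplace (X ^ j * (∑ k ∈ range (m + 1), C (a k) * X ^ (m - k)) * laguerre m ^ n) =
      ∑ k ∈ range (m + 1), a k * moment m (m - k + j) n := by
  rw [mul_sum, sum_mul, map_sum]
  refine sum_congr rfl fun k _ => ?_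
  rw [moment, ← laplace_C_mul, pow_add]
  ring_nf

lemma moment_succ (m j n : ℕ) :
    moment m j (n + 1) = ∑ k ∈ range (m + 1), laguerreCoeff m k * moment m (m - k + j) n := by
  rw [← laplace_X_pow_mul_sum_mul_laguerre_pow, ← laguerre_eq_sum, moment, pow_succ', mul_assoc]

lemma moment_add_one_succ (m j n : ℕ) :
    moment m (j + 1) (n + 1) = (m * (n + 1) + j + 1) * moment m j (n + 1) -
      (n + 1) * ∑ k ∈ range (m + 1), k * laguerreCoeff m k * moment m (m - k + j) n := by
  have hderiv : derivative (X ^ (j + 1) * laguerre m ^ (n + 1)) =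
      C ((m * (n + 1) + j + 1 : ℕ) : ℤ) * (X ^ j * laguerre m ^ (n + 1)) -
      C ((n + 1 : ℕ) : ℤ) * (X ^ j *
        (∑ k ∈ range (m + 1), C (k * laguerreCoeff m k) * X ^ (m - k)) * laguerre m ^ n) := by
    have hX := X_mul_derivative_laguerre m
    generalize ∑ k ∈ range (m + 1), C (k * laguerreCoeff m k) * X ^ (m - k) = S at hX ⊢
    rw [derivative_mul, derivative_X_pow_succ, derivative_pow_succ]
    simp only [Nat.cast_add, Nat.cast_mul, Nat.cast_one, map_add, map_mul, map_one]
    linear_combination (C (n : ℤ) + 1) * X ^ j * laguerre m ^ n * hX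
  have hparts := laplace_derivative (X ^ (j + 1) * laguerre m ^ (n + 1))
  rw [hderiv, map_sub, laplace_C_mul, laplace_C_mul, laplace_X_pow_mul_sum_mul_laguerre_pow,
    ← moment, ← moment, mul_coeff_zero, coeff_X_pow, if_neg (by lia), zero_mul, sub_zero] at hparts
  rw [← hparts]
  push_cast
  ring

/-- The moment `moment m j n` divided by the factorial `(m n + j)!`, which is the contribution of
the leading monomial. For `j = 0` it is the probability of a rank-derangement. -/
noncomputable def normalizedMoment (m j n : ℕ) : ℝ := moment m j n / (m * n + j)!

lemma normalizedMoment_succ (m j n : ℕ) :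
    normalizedMoment m j (n + 1) = ∑ k ∈ range (m + 1),
      laguerreCoeff m k / ((m * (n + 1) + j).descFactorial k : ℝ) *
        normalizedMoment m (m - k + j) n := by
  rw [normalizedMoment, moment_succ, Int.cast_sum, sum_div]
  refine sum_congr rfl fun k hk => ?_
  have hk : k ≤ m := mem_range_succ_iff.mp hk
  have hfac := Nat.factorial_mul_descFactorial
    (show k ≤ m * (n + 1) + j by rw [mul_add_one]; lia)
  rw [normalizedMoment, ← hfac,
    show m * (n + 1) + j - k = m * n + (m - k + j) by rw [mul_add_one]; lia]
  push_cast
  rw [div_mul_div_comm, mul_comm ((_ ! : ℕ) : ℝ)]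

lemma normalizedMoment_add_one_succ_sub (m j n : ℕ) :
    normalizedMoment m (j + 1) (n + 1) - normalizedMoment m j (n + 1) =
      -(n + 1) * ∑ k ∈ range (m + 1),
        k * laguerreCoeff m k / ((m * (n + 1) + (j + 1)).descFactorial (k + 1) : ℝ) *
          normalizedMoment m (m - k + j) n := by
  have hterm : ∀ k ∈ range (m + 1),
      k * laguerreCoeff m k / ((m * (n + 1) + (j + 1)).descFactorial (k + 1) : ℝ) *
        normalizedMoment m (m - k + j) n =
      k * laguerreCoeff m k * moment m (m - k + j) n / (m * (n + 1) + (j + 1))! := by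
    intro k hk
    have hk : k ≤ m := mem_range_succ_iff.mp hk
    have hfac := Nat.factorial_mul_descFactorial
      (show k + 1 ≤ m * (n + 1) + (j + 1) by rw [mul_add_one]; lia)
    rw [normalizedMoment, ← hfac,
      show m * (n + 1) + (j + 1) - (k + 1) = m * n + (m - k + j) by rw [mul_add_one]; lia]
    push_cast
    rw [div_mul_div_comm, mul_comm ((_ ! : ℕ) : ℝ)]
  rw [sum_congr rfl hterm, ← sum_div, normalizedMoment, normalizedMoment, moment_add_one_succ,
    ← add_assoc, Nat.factorial_succ]
  push_cast
  field_simp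
  ring

end Moment

section Limit

lemma coeff_pow_le_coeff_pow {f g : ℕ[X]} (h : ∀ k, f.coeff k ≤ g.coeff k) (n k : ℕ) :
    (f ^ n).coeff k ≤ (g ^ n).coeff k := by
  induction n generalizing k with
  | zero => simp
  | succ n ih =>
    rw [pow_succ, pow_succ, coeff_mul, coeff_mul]
    gcongr
    exacts [ih _, h _]

lemma coeff_one_add_C_mul_X_pow (a n k : ℕ) :
    ((1 + C a * X : ℕ[X]) ^ n).coeff k = n.choose k * a ^ k := by
  have hcomp : (1 + C a * X : ℕ[X]) ^ n = ((1 + X) ^ n).comp (C a * X) := by simp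
  rw [hcomp, comp_C_mul_X_coeff, coeff_one_add_X_pow, Nat.cast_id]

lemma coeff_rook_pow_le (m n k : ℕ) : (rook m ^ n).coeff k ≤ (m * n).choose k * m ^ k := by
  rw [← coeff_one_add_C_mul_X_pow, pow_mul]
  refine coeff_pow_le_coeff_pow (fun i => ?_) n k
  rw [coeff_rook, coeff_one_add_C_mul_X_pow]
  gcongr
  exact Nat.descFactorial_le_pow m i

lemma le_coeff_rook_pow (m n k : ℕ) : n.choose k * (m ^ 2) ^ k ≤ (rook m ^ n).coeff k := by
  rw [← coeff_one_add_C_mul_X_pow]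
  refine coeff_pow_le_coeff_pow (fun i => ?_) n k
  rw [coeff_rook]
  match i with
  | 0 => simp
  | 1 => simp [coeff_one, sq]
  | i + 2 => rw [coeff_add, coeff_C_mul]; simp [coeff_one, coeff_X]

lemma tendsto_pow_div_descFactorial {m : ℕ} (hm : 0 < m) (i k : ℕ) :
    Tendsto (fun n : ℕ => (m * n : ℝ) ^ k / ((m * n + i).descFactorial k : ℝ)) atTop (𝓝 1) := by
  have hmul : Tendsto (fun n => m * n) atTop atTop := tendsto_id.const_mul_atTop' hm
  have hshift : Tendsto (fun n => m * n + i) atTop atTop :=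
    tendsto_atTop_mono (fun n => Nat.le_add_right _ i) hmul
  have hratio := ((tendsto_natCast_div_add_atTop (i : ℝ)).comp hmul).pow k
  have hdesc : Tendsto (fun n : ℕ => (n : ℝ) ^ k / n.descFactorial k) atTop (𝓝 1) := by
    refine (Asymptotics.isEquivalent_iff_tendsto_one ?_).mp (isEquivalent_descFactorial k).symm
    filter_upwards [eventually_ge_atTop k] with n hn
    exact_mod_cast (Nat.descFactorial_pos.mpr hn).ne'
  convert (hratio.mul (hdesc.comp hshift)).congr' ?_ using 2
  · simp
  · filter_upwards [eventually_gt_atTop 0] with n hn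
    simp only [Function.comp_apply]
    push_cast
    rw [div_pow]
    field_simp

lemma tendsto_mul_natCast_atTop {m : ℕ} (hm : 0 < m) :
    Tendsto (fun n : ℕ => (m * n : ℝ)) atTop atTop :=
  tendsto_natCast_atTop_atTop.const_mul_atTop (Nat.cast_pos.mpr hm)

lemma tendsto_pow_div_descFactorial_of_lt {m : ℕ} (hm : 0 < m) (i : ℕ) {r k : ℕ} (hrk : r < k) :
    Tendsto (fun n : ℕ => (m * n : ℝ) ^ r / ((m * n + i).descFactorial k : ℝ)) atTop (𝓝 0) := by
  have hpow : Tendsto (fun n : ℕ => ((m * n : ℝ) ^ (k - r))⁻¹) atTop (𝓝 0) :=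
    ((tendsto_pow_atTop (Nat.sub_ne_zero_of_lt hrk)).comp
      (tendsto_mul_natCast_atTop hm)).inv_tendsto_atTop
  refine (mul_one (0 : ℝ) ▸ hpow.mul (tendsto_pow_div_descFactorial hm i k)).congr' ?_
  filter_upwards [eventually_gt_atTop 0] with n hn
  have hsplit : (m * n : ℝ) ^ k = (m * n) ^ (k - r) * (m * n) ^ r := by
    rw [← pow_add, Nat.sub_add_cancel hrk.le]
  rw [hsplit]
  field_simp

/-- The `k`-th term, without its sign, of the inclusion-exclusion sum for `normalizedMoment m j n`:
the expected number of `k`-sets of rank-preserved cards in a random shuffle when `j = 0`. -/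
noncomputable def rookTerm (m j n k : ℕ) : ℝ :=
  (rook m ^ n).coeff k / (m * n + j).descFactorial k

lemma normalizedMoment_eq_tsum (m j n : ℕ) :
    normalizedMoment m j n = ∑' k, (-1) ^ k * rookTerm m j n k := by
  have hzero : ∀ k ∉ range (m * n + 1), (-1 : ℝ) ^ k * rookTerm m j n k = 0 := by
    intro k hk
    have hcoeff : (rook m ^ n).coeff k = 0 := by
      have := coeff_rook_pow_le m n k
      rw [Nat.choose_eq_zero_of_lt (by simpa using hk), zero_mul] at this
      exact Nat.le_zero.mp this
    simp [rookTerm, hcoeff]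
  rw [tsum_eq_sum hzero, normalizedMoment, moment_eq_sum, Int.cast_sum, sum_div]
  refine sum_congr rfl fun k hk => ?_
  have hk : k ≤ m * n := mem_range_succ_iff.mp hk
  rw [rookTerm, ← Nat.factorial_mul_descFactorial (show k ≤ m * n + j by lia),
    show m * n + j - k = m * n - k + j by lia]
  push_cast
  field_simp

lemma rookTerm_nonneg (m j n k : ℕ) : 0 ≤ rookTerm m j n k := by
  unfold rookTerm; positivity

lemma rookTerm_le (m j n k : ℕ) : rookTerm m j n k ≤ m ^ k / k ! := by
  refine div_le_of_le_mul₀ (by positivity) (by positivity) ?_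
  rw [div_mul_eq_mul_div, le_div_iff₀ (by positivity)]
  norm_cast
  calc (rook m ^ n).coeff k * k ! ≤ (m * n).choose k * m ^ k * k ! := by
        gcongr; exact coeff_rook_pow_le m n k
    _ = m ^ k * (m * n).descFactorial k := by
        rw [Nat.descFactorial_eq_factorial_mul_choose]; ring
    _ ≤ m ^ k * (m * n + j).descFactorial k := by gcongr; lia

lemma tendsto_rookTerm {m : ℕ} (hm : 0 < m) (j k : ℕ) :
    Tendsto (fun n => rookTerm m j n k) atTop (𝓝 (m ^ k / k !)) := by
  have hlower : Tendsto (fun n : ℕ => (m : ℝ) ^ k / k ! * (n.descFactorial k / (n : ℝ) ^ k *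
      ((m * n : ℝ) ^ k / (m * n + j).descFactorial k))) atTop (𝓝 (m ^ k / k !)) := by
    have hdesc := (tendsto_pow_div_descFactorial one_pos 0 k).inv₀ one_ne_zero
    simp only [Nat.cast_one, one_mul, add_zero, inv_div, inv_one] at hdesc
    simpa using (hdesc.mul (tendsto_pow_div_descFactorial hm j k)).const_mul ((m : ℝ) ^ k / k !)
  refine tendsto_of_tendsto_of_tendsto_of_le_of_le' hlower tendsto_const_nhds ?_
    (.of_forall fun n => rookTerm_le m j n k)
  filter_upwards [eventually_gt_atTop 0] with n hn
  calc _ = ((n.choose k * (m ^ 2) ^ k : ℕ) : ℝ) / (m * n + j).descFactorial k := by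
        rw [Nat.descFactorial_eq_factorial_mul_choose n k]
        push_cast
        rw [mul_pow]
        field_simp
        ring
    _ ≤ rookTerm m j n k := by
        unfold rookTerm; gcongr; exact le_coeff_rook_pow m n k

theorem tendsto_normalizedMoment {m : ℕ} (hm : 0 < m) (j : ℕ) :
    Tendsto (normalizedMoment m j) atTop (𝓝 (Real.exp (-m))) := by
  have hexp : ∑' k : ℕ, (-1 : ℝ) ^ k * (m ^ k / k !) = Real.exp (-m) := by
    rw [Real.exp_eq_exp_ℝ, NormedSpace.exp_eq_tsum_div]
    simp_rw [← mul_div_assoc, ← mul_pow, neg_one_mul]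
  rw [← hexp, funext (normalizedMoment_eq_tsum m j)]
  refine tendsto_tsum_of_dominated_convergence (Real.summable_pow_div_factorial m)
    (fun k => (tendsto_rookTerm hm j k).const_mul _) (.of_forall fun n k => ?_)
  rw [norm_mul, norm_pow, norm_neg, norm_one, one_pow, one_mul,
    Real.norm_of_nonneg (rookTerm_nonneg m j n k)]
  exact rookTerm_le m j n k

end Limit

section Increment

lemma laguerreCoeff_zero (m : ℕ) : laguerreCoeff m 0 = 1 := by simp [laguerreCoeff]

lemma laguerreCoeff_one (m : ℕ) : laguerreCoeff m 1 = -(m : ℤ) ^ 2 := by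
  simp [laguerreCoeff, sq]

lemma cast_laguerreCoeff_two (m : ℕ) :
    (laguerreCoeff m 2 : ℝ) = (m : ℝ) ^ 2 * (m - 1) ^ 2 / 2 := by
  have hdesc : m.descFactorial 2 = 2 * m.choose 2 := Nat.descFactorial_eq_factorial_mul_choose m 2
  rw [laguerreCoeff, hdesc]
  push_cast [Nat.cast_choose_two]
  ring

lemma tendsto_mul_sq_div_mul_sub_one (a b : ℝ) :
    Tendsto (fun x : ℝ => x * (x ^ 2 / ((x + a) * (x + b)) - 1)) atTop (𝓝 (-(a + b))) := by
  have hratio (a : ℝ) : Tendsto (fun x : ℝ => x / (x + a)) atTop (𝓝 1) := by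
    have hinv := (tendsto_inv_atTop_zero.comp (tendsto_atTop_add_const_right atTop a tendsto_id))
    have hlim := (hinv.const_mul a).const_sub 1
    rw [mul_zero, sub_zero] at hlim
    refine hlim.congr' ?_
    filter_upwards [eventually_gt_atTop (-a)] with x hx
    have hxa : x + a ≠ 0 := by linarith
    simp only [Function.comp_apply, id]
    field_simp
    ring
  have hlim := ((tendsto_inv_atTop_zero.const_mul (a * b)).const_add (a + b)).neg.mul
    ((hratio a).mul (hratio b))
  simp only [mul_zero, add_zero, mul_one] at hlim
  refine hlim.congr' ?_
  filter_upwards [eventually_gt_atTop 0, eventually_gt_atTop (-a), eventually_gt_atTop (-b)]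
    with x hx hxa hxb
  have hxa : x + a ≠ 0 := by linarith
  have hxb : x + b ≠ 0 := by linarith
  field_simp
  ring

variable {m : ℕ}

lemma tendsto_mul_add_one_atTop (hm : 0 < m) :
    Tendsto (fun n : ℕ => (m * (n + 1) : ℝ)) atTop atTop := by
  simpa [Function.comp_def] using (tendsto_mul_natCast_atTop hm).comp (tendsto_add_atTop_nat 1)

lemma tendsto_mul_div_mul_add_one (hm : 0 < m) :
    Tendsto (fun n : ℕ => (m * n : ℝ) / (m * (n + 1))) atTop (𝓝 1) := by
  refine (tendsto_natCast_div_add_atTop (1 : ℝ)).congr fun n => ?_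
  rw [mul_div_mul_left _ _ (by positivity)]

-- Only the term `k = r` survives in the limit.
lemma tendsto_pow_mul_sum_Ico (hm : 0 < m) (i s : ℕ) {r M : ℕ} (hr : r < M) (b : ℕ → ℝ)
    (index : ℕ → ℕ) :
    Tendsto (fun n : ℕ => (m * (n + 1) : ℝ) ^ (r + s) * ∑ k ∈ Ico r M,
      b k / ((m * (n + 1) + i).descFactorial (k + s) : ℝ) * normalizedMoment m (index k) n)
      atTop (𝓝 (b r * Real.exp (-m))) := by
  have hterm : ∀ k ∈ Ico r M, Tendsto (fun n : ℕ => b k * ((m * (n + 1) : ℝ) ^ (r + s) /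
      ((m * (n + 1) + i).descFactorial (k + s) : ℝ) * normalizedMoment m (index k) n))
      atTop (𝓝 (b k * ((if r = k then 1 else 0) * Real.exp (-m)))) := by
    intro k hk
    refine (Tendsto.mul ?_ (tendsto_normalizedMoment hm (index k))).const_mul (b k)
    split_ifs with hrk
    · subst hrk
      simpa [Function.comp_def] using
        (tendsto_pow_div_descFactorial hm i (r + s)).comp (tendsto_add_atTop_nat 1)
    · have hlt : r + s < k + s := by grind
      simpa [Function.comp_def] using
        (tendsto_pow_div_descFactorial_of_lt hm i hlt).comp (tendsto_add_atTop_nat 1)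
  convert tendsto_finsetSum _ hterm using 1
  · ext n
    rw [mul_sum]
    exact sum_congr rfl fun k _ => by ring
  · simp [hr]

lemma tendsto_mul_normalizedMoment_add_one_sub (hm : 0 < m) (j : ℕ) :
    Tendsto (fun n : ℕ => (m * n : ℝ) * (normalizedMoment m (j + 1) n - normalizedMoment m j n))
      atTop (𝓝 (m * Real.exp (-m))) := by
  have hm0 : (m : ℝ) ≠ 0 := by positivity
  rw [← tendsto_add_atTop_iff_nat 1]
  have hsum := (tendsto_pow_mul_sum_Ico hm (j + 1) 1 (show 1 < m + 1 by lia)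
    (fun k => k * laguerreCoeff m k) (fun k => m - k + j)).const_mul (-(m : ℝ)⁻¹)
  convert hsum using 2 with n
  · rw [normalizedMoment_add_one_succ_sub, ← sum_range_add_sum_Ico _ (show 1 ≤ m + 1 by lia)]
    simp only [sum_range_one, Nat.cast_zero, zero_mul, zero_div, zero_add]
    push_cast
    field_simp
  · rw [laguerreCoeff_one]
    push_cast
    field_simp

lemma tendsto_mul_normalizedMoment_sub (hm : 0 < m) (i j : ℕ) :
    Tendsto (fun n : ℕ => (m * n : ℝ) * (normalizedMoment m i n - normalizedMoment m j n))
      atTop (𝓝 ((i - j) * m * Real.exp (-m))) := by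
  have hzero (i : ℕ) :
      Tendsto (fun n : ℕ => (m * n : ℝ) * (normalizedMoment m i n - normalizedMoment m 0 n))
        atTop (𝓝 (i * m * Real.exp (-m))) := by
    induction i with
    | zero => simp
    | succ i ih =>
      convert ih.add (tendsto_mul_normalizedMoment_add_one_sub hm i) using 2 <;> push_cast <;> ring
  convert (hzero i).sub (hzero j) using 2 <;> ring

lemma tendsto_mul_normalizedMoment_sub_succ (hm : 0 < m) (i : ℕ) :
    Tendsto (fun n : ℕ => (m * (n + 1) : ℝ) *
      (normalizedMoment m i n - normalizedMoment m 0 (n + 1)))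
      atTop (𝓝 (i * m * Real.exp (-m))) := by
  have hstep := tendsto_pow_mul_sum_Ico hm 0 0 (show 1 < m + 1 by lia)
    (fun k => (laguerreCoeff m k : ℝ)) (fun k => m - k)
  have hdiff := ((tendsto_normalizedMoment hm i).sub (tendsto_normalizedMoment hm m)).const_mul
    (m : ℝ)
  convert ((tendsto_mul_normalizedMoment_sub hm i m).add hdiff).sub hstep using 2 with n
  · rw [normalizedMoment_succ, ← sum_range_add_sum_Ico _ (show 1 ≤ m + 1 by lia)]
    simp only [sum_range_one, laguerreCoeff_zero, Nat.descFactorial_zero, tsub_zero, add_zero]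
    push_cast
    ring
  · rw [laguerreCoeff_one]
    push_cast
    ring

lemma tendsto_sq_mul_normalizedMoment_add_one_sub (hm : 2 ≤ m) (j : ℕ) :
    Tendsto (fun n : ℕ =>
      (m * n : ℝ) ^ 2 * (normalizedMoment m (j + 1) n - normalizedMoment m j n) -
        m * (m * n) * normalizedMoment m 0 n)
      atTop (𝓝 (m * (m - 2) * (j + 1) * Real.exp (-m))) := by
  have hpos : 0 < m := by lia
  rw [← tendsto_add_atTop_iff_nat 1]
  have hfirst := ((tendsto_mul_sq_div_mul_sub_one (j + 1 : ℝ) j).comp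
    (tendsto_mul_add_one_atTop hpos)).mul (tendsto_normalizedMoment hpos (m - 1 + j))
  have hshift := tendsto_mul_normalizedMoment_sub_succ hpos (m - 1 + j)
  have htail := tendsto_pow_mul_sum_Ico hpos (j + 1) 1 (show 2 < m + 1 by lia)
    (fun k => k * laguerreCoeff m k) (fun k => m - k + j)
  convert ((hfirst.add hshift).const_mul (m : ℝ)).sub (htail.const_mul (m : ℝ)⁻¹) using 2 with n
  · have hdesc : ((m * (n + 1) + (j + 1)).descFactorial (1 + 1) : ℝ) =
        (m * (n + 1) + (j + 1)) * (m * (n + 1) + j) := by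
      simp [Nat.descFactorial_succ, ← add_assoc, mul_comm]
    rw [normalizedMoment_add_one_succ_sub, ← sum_range_add_sum_Ico _ (show 2 ≤ m + 1 by lia),
      sum_range_succ, sum_range_one, hdesc, laguerreCoeff_one]
    simp only [Function.comp_apply]
    push_cast
    field_simp
    ring
  · rw [Nat.cast_add, Nat.cast_sub hpos, Nat.cast_two, cast_laguerreCoeff_two]
    push_cast
    field_simp
    ring

lemma tendsto_sq_mul_normalizedMoment_sub_zero (hm : 2 ≤ m) (d : ℕ) :
    Tendsto (fun n : ℕ => (m * n : ℝ) ^ 2 * (normalizedMoment m d n - normalizedMoment m 0 n) -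
        d * (m * (m * n) * normalizedMoment m 0 n))
      atTop (𝓝 (m * (m - 2) * (d * (d + 1) / 2) * Real.exp (-m))) := by
  induction d with
  | zero => simp
  | succ d ih =>
    convert ih.add (tendsto_sq_mul_normalizedMoment_add_one_sub hm d) using 2 <;> push_cast <;> ring

lemma tendsto_sq_mul_normalizedMoment_succ_sub (hm : 2 ≤ m) :
    Tendsto (fun n : ℕ =>
      (m * n : ℝ) ^ 2 * (normalizedMoment m 0 (n + 1) - normalizedMoment m m n) +
        m * (m * (m * n) * normalizedMoment m 0 n))
      atTop (𝓝 (m ^ 2 * (m - m * (m - 1) + (m - 1) ^ 2 / 2) * Real.exp (-m))) := by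
  have hpos : 0 < m := by lia
  have hratio := tendsto_mul_div_mul_add_one hpos
  have hfirst := hratio.mul ((tendsto_mul_normalizedMoment_sub hpos (m - 1) 0).sub
    ((tendsto_normalizedMoment hpos 0).const_mul (m : ℝ)))
  have htail := (hratio.pow 2).mul (tendsto_pow_mul_sum_Ico hpos 0 0 (show 2 < m + 1 by lia)
    (fun k => (laguerreCoeff m k : ℝ)) (fun k => m - k))
  convert htail.sub (hfirst.const_mul ((m : ℝ) ^ 2)) using 2 with n
  · rw [normalizedMoment_succ, ← sum_range_add_sum_Ico _ (show 2 ≤ m + 1 by lia),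
      sum_range_succ, sum_range_one, laguerreCoeff_one, laguerreCoeff_zero]
    simp only [Nat.descFactorial_zero, Nat.descFactorial_one, add_zero, tsub_zero]
    push_cast
    field_simp
    ring
  · rw [Nat.cast_sub hpos, cast_laguerreCoeff_two]
    push_cast
    ring

theorem tendsto_sq_mul_normalizedMoment_zero_succ_sub (hm : 2 ≤ m) :
    Tendsto (fun n : ℕ =>
      (m * n : ℝ) ^ 2 * (normalizedMoment m 0 (n + 1) - normalizedMoment m 0 n))
      atTop (𝓝 (m ^ 2 * (m - 1) / 2 * Real.exp (-m))) := by
  convert (tendsto_sq_mul_normalizedMoment_sub_zero hm m).add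
    (tendsto_sq_mul_normalizedMoment_succ_sub hm) using 2 <;> ring

theorem eventually_normalizedMoment_zero_lt_succ (hm : 2 ≤ m) :
    ∀ᶠ n in atTop, normalizedMoment m 0 n < normalizedMoment m 0 (n + 1) := by
  have hlim : (0 : ℝ) < m ^ 2 * (m - 1) / 2 * Real.exp (-m) := by
    have hsub : (0 : ℝ) < m - 1 := sub_pos.mpr (by exact_mod_cast hm)
    positivity
  filter_upwards [(tendsto_sq_mul_normalizedMoment_zero_succ_sub hm).eventually_const_lt hlim]
    with n hn
  exact sub_pos.mp (pos_of_mul_pos_right hn (sq_nonneg _))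

end Increment

section FourSuits

theorem p_eq_normalizedMoment : p = normalizedMoment 4 0 := by
  ext n
  have hfiber (r : Fin n) : #{c : Fin n × Fin 4 | c.1 = r} = 4 := by
    rw [show ({c : Fin n × Fin 4 | c.1 = r} : Finset _) = {r} ×ˢ univ by ext ⟨_, _⟩; simp [eq_comm],
      card_product, card_singleton, card_univ, Fintype.card_fin, one_mul]
  have hcount : (R n : ℤ) = moment 4 0 n := by
    rw [R, card_derangements_eq_laplace, moment, pow_zero, one_mul]
    simp only [hfiber, prod_const, card_univ, Fintype.card_fin]
  rw [p, normalizedMoment, ← hcount, Int.cast_natCast, add_zero]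

lemma coeff_eq_eval_div_pow_mod {f : ℕ[X]} {b : ℕ} (hf : ∀ k, f.coeff k < b) (k : ℕ) :
    f.coeff k = f.eval b / b ^ k % b := by
  have heval (f : ℕ[X]) : f.eval b = f.coeff 0 + b * f.divX.eval b := by
    conv_lhs => rw [← divX_mul_X_add f]
    simp only [eval_add, eval_mul, eval_X, eval_C]
    ring
  induction k generalizing f with
  | zero => rw [heval, pow_zero, Nat.div_one, Nat.add_mul_mod_self_left, Nat.mod_eq_of_lt (hf 0)]
  | succ k ih =>
    rw [← coeff_divX, ih fun i => by rw [coeff_divX]; exact hf _, heval f, pow_succ',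
      ← Nat.div_div_eq_div_mul, Nat.add_mul_div_left _ _ (Nat.zero_lt_of_lt (hf 0)),
      Nat.div_eq_of_lt (hf 0), zero_add]

lemma coeff_le_eval_one (f : ℕ[X]) (k : ℕ) : f.coeff k ≤ f.eval 1 := by
  by_cases hk : k ∈ f.support
  · rw [eval_eq_sum, Polynomial.sum]
    simpa using single_le_sum_of_canonicallyOrdered (f := f.coeff) hk
  · simp [notMem_support_iff.mp hk]

lemma eval_rook (m x : ℕ) :
    (rook m).eval x = ∑ i ∈ range (m + 1), m.choose i * m.descFactorial i * x ^ i := by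
  simp [rook, eval_finsetSum]

/-- The number of rank-derangements in a form that the kernel can evaluate, for `n ≠ 0`: the
coefficients of `rook 4 ^ n` are read off as digits of its value at the base `256 ^ n`,
which exceeds their sum `209 ^ n`. -/
def derangementCount (n : ℕ) : ℤ :=
  ∑ k ∈ range (4 * n + 1), (-1) ^ k *
    (((∑ i ∈ range (4 + 1), (4).choose i * (4).descFactorial i * (256 ^ n) ^ i) ^ n /
      (256 ^ n) ^ k % 256 ^ n : ℕ) : ℤ) * (4 * n - k)!

lemma derangementCount_eq_moment {n : ℕ} (hn : n ≠ 0) : derangementCount n = moment 4 0 n := by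
  have hlt (k : ℕ) : (rook 4 ^ n).coeff k < 256 ^ n := by
    have hone : (rook 4).eval 1 = 209 := by rw [eval_rook]; decide
    calc (rook 4 ^ n).coeff k ≤ 209 ^ n := by
          rw [← hone, ← eval_pow]; exact coeff_le_eval_one _ k
      _ < 256 ^ n := Nat.pow_lt_pow_left (by norm_num) hn
  rw [moment_eq_sum, derangementCount]
  refine sum_congr rfl fun k _ => ?_
  rw [coeff_eq_eval_div_pow_mod hlt, eval_pow, eval_rook, add_zero]

lemma p_mem_Ioo {n : ℕ} (hn : n ≠ 0) {a b d : ℤ} (hd : 0 < d)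
    (ha : a * (4 * n)! < d * derangementCount n) (hb : d * derangementCount n < b * (4 * n)!) :
    p n ∈ Set.Ioo (a / d : ℝ) (b / d) := by
  have hd : (0 : ℝ) < d := Int.cast_pos.mpr hd
  rw [p_eq_normalizedMoment, normalizedMoment, add_zero, ← derangementCount_eq_moment hn,
    Set.mem_Ioo, div_lt_div_iff₀ hd (by positivity), div_lt_div_iff₀ (by positivity) hd,
    mul_comm _ (d : ℝ)]
  exact_mod_cast And.intro ha hb

lemma p_thirteen_mem_Ioo : p 13 ∈ Set.Ioo 0.016232 0.016234 := by
  have hlower : 16232 * ((4 * 13)! : ℤ) < 10 ^ 6 * derangementCount 13 := by decide +kernel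
  have hupper : 10 ^ 6 * derangementCount 13 < 16234 * ((4 * 13)! : ℤ) := by decide +kernel
  convert p_mem_Ioo (by norm_num) (by norm_num) hlower hupper using 2 <;> norm_num

lemma p_twenty_mem_Ioo : p 20 ∈ Set.Ioo 0.016953 0.016955 := by
  have hlower : 16953 * ((4 * 20)! : ℤ) < 10 ^ 6 * derangementCount 20 := by decide +kernel
  have hupper : 10 ^ 6 * derangementCount 20 < 16955 * ((4 * 20)! : ℤ) := by decide +kernel
  convert p_mem_Ioo (by norm_num) (by norm_num) hlower hupper using 2 <;> norm_num

lemma p_fifty_mem_Ioo : p 50 ∈ Set.Ioo 0.017767 0.017769 := by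
  have hlower : 17767 * ((4 * 50)! : ℤ) < 10 ^ 6 * derangementCount 50 := by decide +kernel
  have hupper : 10 ^ 6 * derangementCount 50 < 17769 * ((4 * 50)! : ℤ) := by decide +kernel
  convert p_mem_Ioo (by norm_num) (by norm_num) hlower hupper using 2 <;> norm_num

lemma lt_exp_neg_four : (0.0183 : ℝ) < Real.exp (-4) := by
  rw [Real.exp_neg, show (4 : ℝ) = (4 : ℕ) * 1 by norm_num, Real.exp_nat_mul,
    lt_inv_comm₀ (by norm_num) (by positivity)]
  calc Real.exp 1 ^ 4 < 2.7182818286 ^ 4 := by gcongr; exact Real.exp_one_lt_d9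
    _ < 0.0183⁻¹ := by norm_num

end FourSuits

end RankDerangement

open RankDerangement

theorem p_eventually_monotone_and_chain :
    (∃ N : ℕ, ∀ a b : ℕ, N ≤ a → a ≤ b → p a ≤ p b) ∧
    Filter.Tendsto p Filter.atTop (nhds (Real.exp (-4))) ∧
    p 13 < p 20 ∧ p 20 < p 50 ∧ p 50 < Real.exp (-4) := by
  obtain ⟨N, hN⟩ : ∃ N, ∀ n ≥ N, p n < p (n + 1) := by
    rw [p_eq_normalizedMoment]
    exact Filter.eventually_atTop.mp (eventually_normalizedMoment_zero_lt_succ (by norm_num))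
  have hmono : MonotoneOn p (Set.Ici N) := monotoneOn_of_le_add_one Set.ordConnected_Ici
    fun n _ hn _ => (hN n hn).le
  have hlim : Filter.Tendsto p Filter.atTop (nhds (Real.exp (-4))) := by
    rw [p_eq_normalizedMoment]
    exact_mod_cast tendsto_normalizedMoment four_pos 0
  have h13 := p_thirteen_mem_Ioo.2
  have h20 := p_twenty_mem_Ioo
  have h50 := p_fifty_mem_Ioo
  exact ⟨⟨N, fun a b ha hab => hmono ha (ha.trans hab) hab⟩, hlim, h13.trans (by linarith [h20.1]),
    by linarith [h20.2, h50.1], by linarith [h50.2, lt_exp_neg_four]⟩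
end

section
/- For a random permutation of Fin n × Fin 4, the probability of no rank-fixed point can be written as ∑ over (m0,...,m4) with ∑m_j = n of (-1)^{m1+m3} · multinomial(n;m0,...,m4) · 16^{m1} 72^{m2} 96^{m3} 24^{m4} · (4n - k)!/(4n)!, where k = m1+2m2+3m3+4m4; each summand has absolute value at most multinomial(n;m0,...,m4) · (4/(4n-3))^k · k-th falling-factorial bound, and the whole sum converges to e^{-4} as n → ∞. -/
/-- The summand in the inclusion-exclusion formula for the probability of no
rank-fixed point, indexed by the profile `m : Fin 5 → ℕ`. -/
noncomputable def term (n : ℕ) (m : Fin 5 → ℕ) : ℝ :=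
  (-1) ^ (m 1 + m 3) * (Nat.multinomial Finset.univ m : ℝ) *
    16 ^ m 1 * 72 ^ m 2 * 96 ^ m 3 * 24 ^ m 4 *
    (Nat.factorial (4 * n - (m 1 + 2 * m 2 + 3 * m 3 + 4 * m 4)) : ℝ) /
    (Nat.factorial (4 * n) : ℝ)

/-!
With `K` suits, the pairs of cards of equal rank form a board of `n` diagonal `K × K` blocks inside
the `N × N` square, `N = K n`, and a rank-derangement is a permutation avoiding this board. The
rook polynomial of the board is `r ^ n` with `r = ∑ j, (K choose j)² j! x ^ j`, and
inclusion-exclusion applies the functional `x ^ k ↦ (-1) ^ k (N - k)!` to it. Expanding `r ^ n` by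
the multinomial theorem gives the sum over profiles.

The limit can be read off the coefficients of `r ^ n` directly. Coefficientwise
`1 + K² x ≤ r ≤ (1 + K x) ^ K`, so the `k`-th coefficient of `r ^ n` lies between
`(n choose k) K ^ (2 k)` and `(N choose k) K ^ k`. After division by the falling factorial
`N (N - 1) ⋯ (N - k + 1)` the upper bound is `K ^ k / k!` and the lower one tends to it, so
dominated convergence yields `∑ k, (-1) ^ k K ^ k / k! = exp (-K)`.
-/

open Finset Polynomial Function Filter
open scoped Nat Topology

section PermutationCounting

theorem card_perm_restrict {α : Type*} [Fintype α] (s : Finset α)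
    (P : (s ↪ α) → Prop) :
    Nat.card {σ : Equiv.Perm α // P ((Embedding.subtype (· ∈ s)).trans σ.toEmbedding)} =
      Nat.card {f : s ↪ α // P f} * (Fintype.card α - #s)! := by
  classical
  let splitAt : Equiv.Perm α ≃ Σ f : s ↪ α, {a // a ∉ s} ↪ ↥(Set.range f)ᶜ :=
    ((Equiv.embeddingEquivOfFinite α).symm.trans
      (Equiv.embeddingCongr (Equiv.sumCompl (· ∈ s)).symm (Equiv.refl α))).trans
      Equiv.sumEmbeddingEquivSigmaEmbeddingRestricted
  have card_extensions (f : s ↪ α) :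
      Nat.card ({a // a ∉ s} ↪ ↥(Set.range f)ᶜ) = (Fintype.card α - #s)! := by
    rw [Nat.card_eq_fintype_card, Fintype.card_embedding_eq, Fintype.card_subtype_compl,
      Fintype.card_compl_set, Set.card_range_of_injective f.injective, Fintype.card_coe,
      Nat.descFactorial_self]
  let e : {σ : Equiv.Perm α // P ((Embedding.subtype (· ∈ s)).trans σ.toEmbedding)} ≃
      Σ f : {f : s ↪ α // P f}, {a // a ∉ s} ↪ ↥(Set.range f.1)ᶜ :=
    (splitAt.subtypeEquiv (q := fun p ↦ P p.1) fun _ ↦ Iff.rfl).trans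
      (Equiv.subtypeSigmaEquiv _ P)
  rw [Nat.card_congr e, Nat.card_sigma]
  simp only [card_extensions, sum_const, card_univ, smul_eq_mul, Nat.card_eq_fintype_card]

variable {ι κ : Type*} [Fintype κ] [DecidableEq ι] [DecidableEq κ]

/-- The suits of the cards of rank `r` in the set of cards `s`. -/
def rankSuits (s : Finset (ι × κ)) (r : ι) : Finset κ := {i | (r, i) ∈ s}

@[simp]
theorem mem_rankSuits {s : Finset (ι × κ)} {r : ι} {i : κ} : i ∈ rankSuits s r ↔ (r, i) ∈ s := by
  simp [rankSuits]

/-- A set of cards amounts to a choice of a set of suits in each rank. -/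
def rankSuitsEquiv [Fintype ι] : Finset (ι × κ) ≃ (ι → Finset κ) where
  toFun := rankSuits
  invFun T := {c | c.2 ∈ T c.1}
  left_inv s := by ext; simp
  right_inv T := by ext; simp

theorem sum_card_rankSuits [Fintype ι] (s : Finset (ι × κ)) : ∑ r, #(rankSuits s r) = #s := by
  simp_rw [rankSuits, card_filter]
  rw [← Fintype.sum_prod_type', ← card_filter]
  simp

/-- A rank-preserving injection of a set of cards into the deck is an injection of suits in each
rank. -/
def rankPreservingEmbeddingEquiv (s : Finset (ι × κ)) :
    {f : s ↪ ι × κ // ∀ c, (f c).1 = c.1.1} ≃ (∀ r, rankSuits s r ↪ κ) where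
  toFun f r :=
    { toFun i := (f.1 ⟨(r, i), mem_rankSuits.1 i.2⟩).2
      inj' i j hij := by
        have h := f.1.injective (Prod.ext ((f.2 ⟨(r, i), _⟩).trans (f.2 ⟨(r, j), _⟩).symm) hij)
        exact Subtype.ext (Prod.mk.inj (congrArg Subtype.val h)).2 }
  invFun g :=
    ⟨{ toFun c := (c.1.1, g c.1.1 ⟨c.1.2, mem_rankSuits.2 c.2⟩)
       inj' := by
        rintro ⟨⟨r, i⟩, hi⟩ ⟨⟨r', j⟩, hj⟩ h
        obtain ⟨rfl, hij⟩ := Prod.mk.inj h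
        simpa using (g r).injective hij }, fun _ ↦ rfl⟩
  left_inv f := by
    ext c
    · exact (f.2 c).symm
    · rfl
  right_inv _ := rfl

variable [Fintype ι]

theorem card_perm_rank_fixed_on (s : Finset (ι × κ)) :
    #{σ : Equiv.Perm (ι × κ) | ∀ c ∈ s, (σ c).1 = c.1} =
      (∏ r, (Fintype.card κ).descFactorial #(rankSuits s r)) *
        (Fintype.card ι * Fintype.card κ - #s)! := by
  have card_embeddings : Nat.card {f : s ↪ ι × κ // ∀ c, (f c).1 = c.1.1} =
      ∏ r, (Fintype.card κ).descFactorial #(rankSuits s r) := by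
    rw [Nat.card_congr (rankPreservingEmbeddingEquiv s), Nat.card_pi]
    simp only [Nat.card_eq_fintype_card, Fintype.card_embedding_eq, Fintype.card_coe]
  rw [← card_embeddings, ← Fintype.card_prod,
    ← card_perm_restrict s fun f ↦ ∀ c, (f c).1 = c.1.1, ← Fintype.card_subtype,
    ← Nat.card_eq_fintype_card]
  simp

end PermutationCounting

section RookPolynomial

theorem prod_monomial {R ι : Type*} [CommSemiring R] (s : Finset ι) (k : ι → ℕ) (a : ι → R) :
    ∏ i ∈ s, monomial (k i) (a i) = monomial (∑ i ∈ s, k i) (∏ i ∈ s, a i) := by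
  simp_rw [← C_mul_X_pow_eq_monomial, prod_mul_distrib, prod_pow_eq_pow_sum, map_prod]

/-- The number of ways to place `j` non-attacking rooks on a `K × K` board. -/
def rookNumber (K j : ℕ) : ℕ := K.choose j * K.descFactorial j

/-- The rook polynomial of the full `K × K` board. -/
noncomputable def rookPoly (K : ℕ) : ℕ[X] := ∑ j ∈ range (K + 1), monomial j (rookNumber K j)

theorem coeff_rookPoly (K j : ℕ) : (rookPoly K).coeff j = rookNumber K j := by
  simp only [rookPoly, finsetSum_coeff, coeff_monomial, sum_ite_eq', mem_range]
  split_ifs with h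
  · rfl
  · simp [rookNumber, Nat.choose_eq_zero_of_lt (show K < j by lia)]

theorem natDegree_rookPoly_pow_le (K n : ℕ) : (rookPoly K ^ n).natDegree ≤ K * n := by
  rw [mul_comm]
  refine natDegree_pow_le_of_le n (natDegree_sum_le_of_forall_le _ _ fun j hj ↦ ?_)
  exact (natDegree_monomial_le _).trans (mem_range_succ_iff.1 hj)

theorem sum_finset_monomial_card (κ : Type*) [Fintype κ] :
    ∑ u : Finset κ, monomial #u ((Fintype.card κ).descFactorial #u) =
      rookPoly (Fintype.card κ) := by
  rw [← powerset_univ, sum_powerset_apply_card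
    (fun j ↦ monomial j ((Fintype.card κ).descFactorial j)), card_univ, rookPoly]
  simp [rookNumber, smul_monomial]

/-- The functional `x ^ k ↦ (-1) ^ k (N - k)!`, which turns the rook polynomial of a board inside
the `N × N` square into the number of permutations avoiding that board. -/
noncomputable def hitFunctional (N : ℕ) : ℕ[X] →ₗ[ℕ] ℤ :=
  lsum fun k ↦ LinearMap.toSpanSingleton ℕ ℤ ((-1) ^ k * (N - k)!)

theorem hitFunctional_monomial (N k a : ℕ) :
    hitFunctional N (monomial k a) = a * ((-1) ^ k * (N - k)!) := by
  simp [hitFunctional, sum_monomial_index]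

theorem cast_factorial_sub_div_factorial {N k : ℕ} (hk : k ≤ N) :
    ((N - k)! : ℝ) / N ! = (N.descFactorial k : ℝ)⁻¹ := by
  rw [← Nat.factorial_mul_descFactorial hk, Nat.cast_mul, div_mul_cancel_left₀ (by positivity)]

theorem hitFunctional_div_factorial {N : ℕ} {p : ℕ[X]} (hp : p.natDegree ≤ N) :
    (hitFunctional N p : ℝ) / N ! = ∑' k, (-1) ^ k * ((p.coeff k : ℝ) / N.descFactorial k) := by
  have hsum : hitFunctional N p =
      ∑ k ∈ range (N + 1), (p.coeff k : ℤ) * ((-1) ^ k * (N - k)!) := by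
    rw [hitFunctional, lsum_apply, p.sum_over_range' (by simp) (N + 1) (by lia)]
    simp
  rw [hsum, tsum_eq_sum (s := range (N + 1)), Int.cast_sum, sum_div]
  · refine sum_congr rfl fun k hk ↦ ?_
    push_cast
    rw [div_eq_mul_inv (p.coeff k : ℝ),
      ← cast_factorial_sub_div_factorial (mem_range_succ_iff.1 hk)]
    ring
  · intro k hk
    simp [coeff_eq_zero_of_natDegree_lt (show p.natDegree < k by rw [mem_range] at hk; lia)]

end RookPolynomial

section RankDerangements

variable (ι κ : Type*) [Fintype ι] [Fintype κ] [DecidableEq ι] [DecidableEq κ]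

/-- The permutations of the deck with ranks `ι` and suits `κ` without a rank-fixed point. -/
def rankDerangements : Finset (Equiv.Perm (ι × κ)) := {σ | ∀ c, (σ c).1 ≠ c.1}

theorem card_rankDerangements_eq_sum_finset :
    (#(rankDerangements ι κ) : ℤ) =
      ∑ s : Finset (ι × κ),
        (-1) ^ #s * (#{σ : Equiv.Perm (ι × κ) | ∀ c ∈ s, (σ c).1 = c.1} : ℤ) := by
  have h := inclusion_exclusion_card_inf_compl univ
    fun c : ι × κ ↦ ({σ | (σ c).1 = c.1} : Finset (Equiv.Perm (ι × κ)))
  rw [powerset_univ] at h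
  convert h using 3 with s
  · ext σ; simp [rankDerangements, mem_inf]
  · congr 2; ext σ; simp [mem_inf]

theorem card_rankDerangements :
    (#(rankDerangements ι κ) : ℤ) =
      hitFunctional (Fintype.card κ * Fintype.card ι)
        (rookPoly (Fintype.card κ) ^ Fintype.card ι) := by
  have rook_prod (s : Finset (ι × κ)) :
      ∏ r, monomial #(rankSuits s r) ((Fintype.card κ).descFactorial #(rankSuits s r)) =
        monomial #s (∏ r, (Fintype.card κ).descFactorial #(rankSuits s r)) := by
    rw [prod_monomial, sum_card_rankSuits]
  rw [← sum_finset_monomial_card κ, ← card_univ (α := ι), ← prod_const, prod_univ_sum,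
    Fintype.piFinset_univ, ← rankSuitsEquiv.sum_comp, map_sum, card_rankDerangements_eq_sum_finset]
  refine sum_congr rfl fun s _ ↦ ?_
  simp only [rankSuitsEquiv, Equiv.coe_fn_mk, rook_prod, hitFunctional_monomial,
    card_perm_rank_fixed_on, card_univ]
  push_cast
  rw [mul_comm (Fintype.card κ)]
  ring

end RankDerangements

section Profiles

variable {K : ℕ}

/-- The number of cards `∑ j, j * m j` in a set of cards with profile `m`, that is, one meeting
exactly `m j` ranks in `j` cards. -/
def profileSize (m : Fin (K + 1) → ℕ) : ℕ := ∑ j, j * m j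

/-- The number of ways to place non-attacking rooks on distinct `K × K` boards, `m j` of which are
to carry `j` rooks each. -/
def profileWeight (m : Fin (K + 1) → ℕ) : ℕ := ∏ j : Fin (K + 1), rookNumber K j ^ m j

/-- The contribution of the profile `m` to the inclusion-exclusion formula for the probability of
no rank-fixed point, with `n` ranks and `K` suits. -/
noncomputable def profileTerm (n : ℕ) (m : Fin (K + 1) → ℕ) : ℝ :=
  (-1) ^ profileSize m * Nat.multinomial univ m * profileWeight m * (K * n - profileSize m)! /
    (K * n)!

theorem rookPoly_pow (K n : ℕ) :
    rookPoly K ^ n = ∑ m ∈ Finset.Nat.antidiagonalTuple (K + 1) n,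
      monomial (profileSize m) (Nat.multinomial univ m * profileWeight m) := by
  rw [rookPoly, sum_range, sum_pow_eq_sum_piAntidiag, piAntidiag_univ_fin_eq_antidiagonalTuple]
  refine sum_congr rfl fun m _ ↦ ?_
  simp_rw [monomial_pow, prod_monomial]
  rw [← nsmul_eq_mul, smul_monomial, smul_eq_mul, profileSize, profileWeight]

theorem hitFunctional_rookPoly_pow_div_factorial (K n : ℕ) :
    (hitFunctional (K * n) (rookPoly K ^ n) : ℝ) / (K * n)! =
      ∑ m ∈ Finset.Nat.antidiagonalTuple (K + 1) n, profileTerm n m := by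
  rw [rookPoly_pow, map_sum, Int.cast_sum, sum_div]
  refine sum_congr rfl fun m _ ↦ ?_
  rw [hitFunctional_monomial, profileTerm]
  push_cast
  ring

theorem profileSize_add_le {n : ℕ} {m : Fin (K + 1) → ℕ} (hm : ∑ j, m j = n) {j : Fin (K + 1)}
    (hj : m j ≠ 0) : profileSize m + (K - j) ≤ K * n := by
  have hgap : K - j ≤ ∑ i, (K - i) * m i :=
    (Nat.le_mul_of_pos_right _ (Nat.pos_of_ne_zero hj)).trans
      (single_le_sum (f := fun i : Fin (K + 1) ↦ (K - i) * m i) (fun _ _ ↦ Nat.zero_le _)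
        (mem_univ j))
  calc profileSize m + (K - j) ≤ ∑ i, (i * m i + (K - i) * m i) := by
        rw [sum_add_distrib]; exact Nat.add_le_add_left hgap _
    _ = ∑ i, K * m i := by
        refine sum_congr rfl fun i _ ↦ ?_
        rw [← add_mul, Nat.add_sub_cancel' i.is_le]
    _ = K * n := by rw [← mul_sum, hm]

theorem profileSize_le {n : ℕ} {m : Fin (K + 1) → ℕ} (hm : ∑ j, m j = n) :
    profileSize m ≤ K * n := by
  rw [← hm, profileSize, mul_sum]
  exact sum_le_sum fun j _ ↦ Nat.mul_le_mul_right _ j.is_le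

theorem rookNumber_le (K j : ℕ) : rookNumber K j ≤ (K * (K + 1 - j)) ^ j := by
  rw [rookNumber, mul_pow, mul_comm]
  exact Nat.mul_le_mul (Nat.descFactorial_le_pow K j) (Nat.choose_le_sub_pow K j)

theorem profileWeight_le {n : ℕ} {m : Fin (K + 1) → ℕ} (hm : ∑ j, m j = n) :
    profileWeight m ≤ (K * (K * n + 1 - profileSize m)) ^ profileSize m := by
  rw [profileWeight]
  nth_rewrite 2 [profileSize]
  rw [← prod_pow_eq_pow_sum]
  refine prod_le_prod' fun j _ ↦ ?_
  rcases eq_or_ne (m j) 0 with hj | hj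
  · simp [hj]
  rw [pow_mul]
  have hgap : K + 1 - j ≤ K * n + 1 - profileSize m := by
    have := profileSize_add_le hm hj
    lia
  calc rookNumber K j ^ m j ≤ ((K * (K + 1 - j)) ^ (j : ℕ)) ^ m j := by
        gcongr; exact rookNumber_le K j
    _ ≤ _ := by gcongr

-- Pairing the `i`-th factor with the `i`-th last bounds each product of two below by `N(N+1-k)`.
theorem pow_le_descFactorial_sq (N k : ℕ) : (N * (N + 1 - k)) ^ k ≤ N.descFactorial k ^ 2 := by
  have hpair : N.descFactorial k ^ 2 = ∏ i ∈ range k, (N - i) * (N - (k - 1 - i)) := by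
    rw [prod_mul_distrib, prod_range_reflect (N - ·) k, sq, Nat.descFactorial_eq_prod_range]
  rw [hpair, ← card_range k, ← prod_const, card_range]
  refine prod_le_prod' fun i hi ↦ ?_
  rw [mem_range] at hi
  rcases lt_or_ge N k with hk | hk
  · simp [Nat.sub_eq_zero_of_le hk]
  obtain ⟨j, rfl⟩ : ∃ j, k = i + 1 + j := ⟨k - (i + 1), by lia⟩
  obtain ⟨d, rfl⟩ : ∃ d, N = i + 1 + j + d := ⟨N - (i + 1 + j), by lia⟩
  rw [show i + 1 + j + d + 1 - (i + 1 + j) = d + 1 by lia,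
    show i + 1 + j + d - i = 1 + j + d by lia,
    show i + 1 + j + d - (i + 1 + j - 1 - i) = i + 1 + d by lia]
  nlinarith [Nat.zero_le (i * j)]

theorem profileWeight_mul_pow_le {n : ℕ} {m : Fin (K + 1) → ℕ} (hm : ∑ j, m j = n) :
    profileWeight m * n ^ profileSize m ≤ (K * n).descFactorial (profileSize m) ^ 2 :=
  calc profileWeight m * n ^ profileSize m
      ≤ (K * (K * n + 1 - profileSize m)) ^ profileSize m * n ^ profileSize m := by
        gcongr; exact profileWeight_le hm
    _ = (K * n * (K * n + 1 - profileSize m)) ^ profileSize m := by rw [← mul_pow]; ring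
    _ ≤ _ := pow_le_descFactorial_sq _ _

theorem abs_profileTerm_le {n : ℕ} {m : Fin (K + 1) → ℕ} (hm : ∑ j, m j = n) :
    |profileTerm n m| ≤ Nat.multinomial univ m * (1 / (n : ℝ)) ^ profileSize m *
      (K * n).descFactorial (profileSize m) := by
  have hsize := profileSize_le hm
  have hdesc : (0 : ℝ) < (K * n).descFactorial (profileSize m) := by
    exact_mod_cast Nat.descFactorial_pos.2 hsize
  have hpow : (0 : ℝ) < (n : ℝ) ^ profileSize m := by
    rcases n.eq_zero_or_pos with rfl | hn
    · simp [Nat.le_zero.1 hsize]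
    · positivity
  have hweight : (profileWeight m : ℝ) / (K * n).descFactorial (profileSize m) ≤
      (1 / (n : ℝ)) ^ profileSize m * (K * n).descFactorial (profileSize m) := by
    rw [one_div_pow, one_div_mul_eq_div, div_le_div_iff₀ hdesc hpow, ← sq]
    exact_mod_cast profileWeight_mul_pow_le hm
  calc |profileTerm n m|
      = Nat.multinomial univ m *
          (profileWeight m / (K * n).descFactorial (profileSize m)) := by
        rw [profileTerm, mul_div_assoc, cast_factorial_sub_div_factorial hsize]
        simp [abs_mul, div_eq_mul_inv, mul_assoc]
    _ ≤ _ := by rw [mul_assoc]; gcongr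

end Profiles

section Limit

theorem coeff_pow_le_coeff_pow {R : Type*} [CommSemiring R] [PartialOrder R]
    [IsOrderedRing R] [CanonicallyOrderedAdd R] {p q : R[X]} (h : ∀ k, p.coeff k ≤ q.coeff k)
    (n k : ℕ) :
    (p ^ n).coeff k ≤ (q ^ n).coeff k := by
  induction n generalizing k with
  | zero => simp
  | succ n ih =>
    simp_rw [pow_succ, coeff_mul]
    gcongr with x
    exacts [ih x.1, h x.2]

theorem coeff_one_add_C_mul_X_pow {R : Type*} [CommSemiring R] (a : R) (n k : ℕ) :
    ((1 + C a * X) ^ n : R[X]).coeff k = n.choose k * a ^ k := by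
  have h : (1 + C a * X : R[X]) ^ n = ((1 + X) ^ n : R[X]).comp (C a * X) := by simp
  rw [h, comp_C_mul_X_coeff, coeff_one_add_X_pow]

theorem coeff_rookPoly_pow_le (K n k : ℕ) :
    (rookPoly K ^ n).coeff k ≤ (K * n).choose k * K ^ k := by
  calc (rookPoly K ^ n).coeff k ≤ (((1 + C K * X) ^ K) ^ n).coeff k := by
        refine coeff_pow_le_coeff_pow (fun j ↦ ?_) n k
        rw [coeff_rookPoly, coeff_one_add_C_mul_X_pow, rookNumber, Nat.cast_id]
        gcongr
        exact Nat.descFactorial_le_pow K j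
    _ = (K * n).choose k * K ^ k := by rw [← pow_mul, coeff_one_add_C_mul_X_pow, Nat.cast_id]

theorem le_coeff_rookPoly_pow (K n k : ℕ) :
    n.choose k * (K ^ 2) ^ k ≤ (rookPoly K ^ n).coeff k := by
  calc n.choose k * (K ^ 2) ^ k = ((1 + C (K ^ 2) * X) ^ n).coeff k := by
        rw [coeff_one_add_C_mul_X_pow, Nat.cast_id]
    _ ≤ (rookPoly K ^ n).coeff k := by
        refine coeff_pow_le_coeff_pow (fun j ↦ ?_) n k
        rw [coeff_rookPoly, rookNumber, ← pow_one (1 + C (K ^ 2) * X),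
          coeff_one_add_C_mul_X_pow, Nat.cast_id]
        match j with
        | 0 => simp
        | 1 => simp [sq]
        | j + 2 => simp [Nat.choose_eq_zero_of_lt]

theorem coeff_rookPoly_pow_div_descFactorial_le (K n k : ℕ) :
    ((rookPoly K ^ n).coeff k : ℝ) / (K * n).descFactorial k ≤ (K : ℝ) ^ k / k ! := by
  refine div_le_of_le_mul₀ (by positivity) (by positivity) ?_
  calc ((rookPoly K ^ n).coeff k : ℝ) ≤ (K * n).choose k * (K : ℝ) ^ k := by
        exact_mod_cast coeff_rookPoly_pow_le K n k
    _ = (K : ℝ) ^ k / k ! * (K * n).descFactorial k := by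
        rw [Nat.descFactorial_eq_factorial_mul_choose]
        push_cast
        field_simp

theorem le_coeff_rookPoly_pow_div_descFactorial (K n k : ℕ) :
    n.choose k * ((K : ℝ) / n) ^ k ≤ (rookPoly K ^ n).coeff k / (K * n).descFactorial k := by
  rcases lt_or_ge (K * n) k with hk | hk
  · have hzero : n.choose k * ((K : ℝ) / n) ^ k = 0 := by
      rcases K.eq_zero_or_pos with rfl | hK
      · simp [show k ≠ 0 by lia]
      · simp [Nat.choose_eq_zero_of_lt (show n < k by nlinarith)]
    rw [hzero]
    positivity
  have hdesc : (0 : ℝ) < (K * n).descFactorial k := mod_cast Nat.descFactorial_pos.2 hk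
  rw [le_div_iff₀ hdesc]
  calc n.choose k * ((K : ℝ) / n) ^ k * (K * n).descFactorial k
      ≤ n.choose k * ((K : ℝ) / n) ^ k * (K * n) ^ k := by
        gcongr
        exact_mod_cast Nat.descFactorial_le_pow (K * n) k
    _ ≤ n.choose k * ((K : ℝ) ^ 2) ^ k := by
        rw [mul_assoc, ← mul_pow]
        gcongr
        rw [show (K : ℝ) / n * (K * n) = K ^ 2 * (n / n) by ring]
        exact mul_le_of_le_one_right (by positivity) (div_self_le_one _)
    _ ≤ (rookPoly K ^ n).coeff k := by exact_mod_cast le_coeff_rookPoly_pow K n k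

theorem tendsto_coeff_rookPoly_pow_div_descFactorial (K k : ℕ) :
    Tendsto (fun n : ℕ ↦ ((rookPoly K ^ n).coeff k : ℝ) / (K * n).descFactorial k) atTop
      (𝓝 ((K : ℝ) ^ k / k !)) := by
  have hmean : Tendsto (fun n : ℕ ↦ (n : ℝ) * ((K : ℝ) / n)) atTop (𝓝 K) :=
    tendsto_const_nhds.congr' <| (eventually_ne_atTop 0).mono fun n hn ↦ by field_simp
  exact tendsto_of_tendsto_of_tendsto_of_le_of_le
    (ProbabilityTheory.tendsto_choose_mul_pow_atTop k hmean) tendsto_const_nhds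
    (fun n ↦ le_coeff_rookPoly_pow_div_descFactorial K n k)
    (fun n ↦ coeff_rookPoly_pow_div_descFactorial_le K n k)

theorem tendsto_hitFunctional_rookPoly_pow_div_factorial (K : ℕ) :
    Tendsto (fun n : ℕ ↦ (hitFunctional (K * n) (rookPoly K ^ n) : ℝ) / (K * n)!) atTop
      (𝓝 (Real.exp (-K))) := by
  have hexp : Real.exp (-K) = ∑' k : ℕ, (-1) ^ k * ((K : ℝ) ^ k / k !) := by
    rw [Real.exp_eq_exp_ℝ, NormedSpace.exp_eq_tsum_div]
    simp_rw [neg_pow (K : ℝ), mul_div_assoc]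
  rw [hexp]
  simp_rw [hitFunctional_div_factorial (natDegree_rookPoly_pow_le K _)]
  refine tendsto_tsum_of_dominated_convergence (Real.summable_pow_div_factorial K)
    (fun k ↦ (tendsto_coeff_rookPoly_pow_div_descFactorial K k).const_mul _)
    (Eventually.of_forall fun n k ↦ ?_)
  simpa using coeff_rookPoly_pow_div_descFactorial_le K n k

end Limit

theorem no_rank_fixed_point_probability_general (K : ℕ) :
    (∀ n : ℕ, (#(rankDerangements (Fin n) (Fin K)) : ℝ) / (K * n)! =
      ∑ m ∈ Finset.Nat.antidiagonalTuple (K + 1) n, profileTerm n m) ∧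
    (∀ n : ℕ, ∀ m ∈ Finset.Nat.antidiagonalTuple (K + 1) n,
      |profileTerm n m| ≤ Nat.multinomial univ m * (1 / (n : ℝ)) ^ profileSize m *
        (K * n).descFactorial (profileSize m)) ∧
    Tendsto (fun n : ℕ ↦ (#(rankDerangements (Fin n) (Fin K)) : ℝ) / (K * n)!) atTop
      (𝓝 (Real.exp (-K))) := by
  have hcard (n : ℕ) : (#(rankDerangements (Fin n) (Fin K)) : ℝ) =
      hitFunctional (K * n) (rookPoly K ^ n) := by
    exact_mod_cast (card_rankDerangements (Fin n) (Fin K)).trans (by simp)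
  simp_rw [hcard]
  exact ⟨hitFunctional_rookPoly_pow_div_factorial K,
    fun _ _ hm ↦ abs_profileTerm_le (Finset.Nat.mem_antidiagonalTuple.1 hm),
    tendsto_hitFunctional_rookPoly_pow_div_factorial K⟩

theorem profileSize_four (m : Fin 5 → ℕ) :
    profileSize (K := 4) m = m 1 + 2 * m 2 + 3 * m 3 + 4 * m 4 := by
  simp [profileSize, Fin.sum_univ_five]

theorem profileTerm_four (n : ℕ) (m : Fin 5 → ℕ) : profileTerm (K := 4) n m = term n m := by
  have hweight : profileWeight (K := 4) m = 16 ^ m 1 * 72 ^ m 2 * 96 ^ m 3 * 24 ^ m 4 := by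
    simp [profileWeight, Fin.prod_univ_five, rookNumber, Nat.descFactorial, Nat.choose]
  have hsign : (-1 : ℝ) ^ (m 1 + 2 * m 2 + 3 * m 3 + 4 * m 4) = (-1) ^ (m 1 + m 3) := by
    rw [neg_one_pow_eq_pow_mod_two, neg_one_pow_eq_pow_mod_two (n := m 1 + m 3)]
    congr 1
    lia
  rw [profileTerm, term, profileSize_four, hweight, hsign]
  push_cast
  ring

theorem one_div_le_div_mul_sub {a b x : ℝ} (hx : 0 < x) (hb : 0 ≤ b) (hbx : b < a * x) :
    1 / x ≤ a / (a * x - b) := by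
  rw [div_le_div_iff₀ hx (by linarith)]
  linarith

theorem no_rank_fixed_point_probability :
    (∀ n : ℕ, (R n : ℝ) / (Nat.factorial (4 * n) : ℝ) =
      ∑ m ∈ Finset.Nat.antidiagonalTuple 5 n, term n m) ∧
    (∀ n : ℕ, 1 ≤ n → ∀ m ∈ Finset.Nat.antidiagonalTuple 5 n,
      |term n m| ≤ (Nat.multinomial Finset.univ m : ℝ) *
        (4 / (4 * (n : ℝ) - 3)) ^ (m 1 + 2 * m 2 + 3 * m 3 + 4 * m 4) *
        ((4 * n).descFactorial (m 1 + 2 * m 2 + 3 * m 3 + 4 * m 4) : ℝ)) ∧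
    Filter.Tendsto (fun n : ℕ => (R n : ℝ) / (Nat.factorial (4 * n) : ℝ))
      Filter.atTop (nhds (Real.exp (-4))) := by
  obtain ⟨hsum, hbound, hlim⟩ := no_rank_fixed_point_probability_general 4
  simp only [profileTerm_four, profileSize_four] at hsum hbound
  refine ⟨hsum, fun n hn m hm ↦ (hbound n m hm).trans ?_, mod_cast hlim⟩
  have hn' : (1 : ℝ) ≤ n := mod_cast hn
  have hbase : 1 / (n : ℝ) ≤ 4 / (4 * n - 3) :=
    one_div_le_div_mul_sub (by linarith) (by norm_num) (by linarith)
  gcongr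
end
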